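/- arXiv:math/0510601 — 6 statements merged into one kernel-verified Lean document; each statement's English description precedes it below -/
import Mathlib

section
/- Let Z be a real random variable such that E[e^{λ_o |Z|}] < ∞ for some λ_o > 0, and let h be its Cramér transform, h(t) = sup_{s ∈ ℝ} ( s t − log E[e^{sZ}] ). Then for every 0 ≤ δ < 1, E[ exp(δ h(Z)) ] ≤ (1 + δ)/(1 − δ). -/
open MeasureTheory ENNReal Set
open scoped NNReal ENNReal

noncomputable section

/-- Extended exponential `ℝ≥0∞ → ℝ≥0∞`. -/
def expEN (v : ℝ≥0∞) : ℝ≥0∞ := if v = ⊤ then ⊤ else ENNReal.ofReal (Real.exp v.toReal)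

/-- If all upper tails at points of `A` have mass at most `c`, then so has `A`. -/
lemma tail_aux {Ω : Type*} [MeasurableSpace Ω] (P : Measure Ω)
    (Z : Ω → ℝ) (A : Set ℝ) (c : ℝ≥0∞)
    (hA : ∀ t ∈ A, P {ω | t ≤ Z ω} ≤ c) : P {ω | Z ω ∈ A} ≤ c := by
  by_cases hmin : ∃ a ∈ A, ∀ t ∈ A, a ≤ t
  · obtain ⟨a, ha, hle⟩ := hmin
    exact (measure_mono (fun ω (hω : Z ω ∈ A) => hle (Z ω) hω)).trans (hA a ha)
  · push Not at hmin
    obtain ⟨B, hBA, hBc, hB⟩ := TopologicalSpace.isOpen_biUnion_countable A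
      (fun t : ℝ => Ioi t) (fun t _ => isOpen_Ioi)
    have hsub : {ω | Z ω ∈ A} ⊆ ⋃ t ∈ B, {ω | t < Z ω} := by
      intro ω hω
      obtain ⟨t, ht, hlt⟩ := hmin (Z ω) hω
      have : Z ω ∈ ⋃ t ∈ B, Ioi t := by
        rw [hB]; exact mem_biUnion ht hlt
      simpa using this
    refine (measure_mono hsub).trans ?_
    rw [measure_biUnion_eq_iSup hBc]
    · refine iSup₂_le fun t ht => ?_
      exact (measure_mono (fun ω (hω : t < Z ω) => hω.le)).trans (hA t (hBA ht))
    · intro x hx y hy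
      rcases le_total x y with hxy | hxy
      · exact ⟨x, hx, fun ω hω => hω, fun ω (hω : y < Z ω) => lt_of_le_of_lt hxy hω⟩
      · exact ⟨y, hy, fun ω (hω : x < Z ω) => lt_of_le_of_lt hxy hω, fun ω hω => hω⟩

lemma integrable_aux {Ω : Type*} [MeasurableSpace Ω] (P : Measure Ω)
    (Z : Ω → ℝ) (hZ : Measurable Z) (s : ℝ)
    (hs : ∫⁻ ω, ENNReal.ofReal (Real.exp (s * Z ω)) ∂P < ⊤) :
    Integrable (fun ω => Real.exp (s * Z ω)) P := by
  refine ⟨by fun_prop, ?_⟩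
  rw [hasFiniteIntegral_iff_ofReal (Filter.Eventually.of_forall fun ω => (Real.exp_pos _).le)]
  exact hs

lemma cramer_tail {Ω : Type*} [MeasurableSpace Ω] (P : Measure Ω) [IsProbabilityMeasure P]
    (Z : Ω → ℝ) (hZ : Measurable Z) (u : ℝ) :
    P {ω | Z ω ∈ {t : ℝ | ∃ s : ℝ, 0 ≤ s ∧ Integrable (fun ω => Real.exp (s * Z ω)) P ∧
        u < s * t - Real.log (∫ ω, Real.exp (s * Z ω) ∂P)}} ≤ ENNReal.ofReal (Real.exp (-u)) := by
  apply tail_aux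
  rintro t ⟨s, hs0, hs, hu⟩
  have h1 := ProbabilityTheory.measure_ge_le_exp_cgf (μ := P) (X := Z) t hs0 hs
  rw [← ENNReal.ofReal_toReal (measure_ne_top P {ω | t ≤ Z ω})]
  apply ENNReal.ofReal_le_ofReal
  refine h1.trans (Real.exp_le_exp.2 ?_)
  have : ProbabilityTheory.cgf Z P s = Real.log (∫ ω, Real.exp (s * Z ω) ∂P) := rfl
  rw [this]; linarith

lemma cramer_tail_two {Ω : Type*} [MeasurableSpace Ω] (P : Measure Ω) [IsProbabilityMeasure P]
    (Z : Ω → ℝ) (hZ : Measurable Z) (h : ℝ → ℝ≥0∞)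
    (hdef : ∀ t : ℝ, h t =
      ⨆ (s : ℝ) (_ : ∫⁻ ω, ENNReal.ofReal (Real.exp (s * Z ω)) ∂P < ⊤),
        ENNReal.ofReal (s * t - Real.log (∫ ω, Real.exp (s * Z ω) ∂P)))
    (u : ℝ) :
    P {ω | ENNReal.ofReal u < h (Z ω)} ≤ ENNReal.ofReal (2 * Real.exp (-u)) := by
  have h1 := cramer_tail P Z hZ u
  have h2 := cramer_tail P (fun ω => - Z ω) hZ.neg u
  rw [two_mul, ENNReal.ofReal_add (Real.exp_pos _).le (Real.exp_pos _).le]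
  refine le_trans ?_ (add_le_add h1 h2)
  refine le_trans (measure_mono ?_) (measure_union_le _ _)
  intro ω hω
  have hω' : ENNReal.ofReal u < h (Z ω) := hω
  rw [hdef, lt_iSup_iff] at hω'
  obtain ⟨s, hω'⟩ := hω'
  rw [lt_iSup_iff] at hω'
  obtain ⟨hs, hω'⟩ := hω'
  have hlt := (ENNReal.ofReal_lt_ofReal_iff'.1 hω').1
  have hi := integrable_aux P Z hZ s hs
  rcases le_total 0 s with h0 | h0
  · left
    exact ⟨s, h0, hi, hlt⟩
  · right
    refine ⟨-s, by linarith, ?_, ?_⟩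
    · simpa using hi
    · simpa using hlt

/-- If `E e^{λ₀|Z|} < ∞` and `h` is the Cramér transform of `Z`, then
`E exp(δ h(Z)) ≤ (1+δ)/(1−δ)` for all `0 ≤ δ < 1`. -/
theorem cramer_transform_exp_moment
    {Ω : Type*} [MeasurableSpace Ω] (P : Measure Ω) [IsProbabilityMeasure P]
    (Z : Ω → ℝ) (hZ : Measurable Z)
    (lam₀ : ℝ) (hlam₀ : 0 < lam₀)
    (hexp : ∫⁻ ω, ENNReal.ofReal (Real.exp (lam₀ * |Z ω|)) ∂P < ⊤)
    (h : ℝ → ℝ≥0∞)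
    (hdef : ∀ t : ℝ, h t =
      ⨆ (s : ℝ) (_ : ∫⁻ ω, ENNReal.ofReal (Real.exp (s * Z ω)) ∂P < ⊤),
        ENNReal.ofReal (s * t - Real.log (∫ ω, Real.exp (s * Z ω) ∂P)))
    (δ : ℝ) (hδ0 : 0 ≤ δ) (hδ1 : δ < 1) :
    ∫⁻ ω, expEN (ENNReal.ofReal δ * h (Z ω)) ∂P ≤ ENNReal.ofReal ((1 + δ) / (1 - δ)) := by
  have htail := cramer_tail_two P Z hZ h hdef
  have hmeas : Measurable h := by
    have : LowerSemicontinuous h := by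
      have he : h = fun t => ⨆ (s : ℝ) (_ : ∫⁻ ω, ENNReal.ofReal (Real.exp (s * Z ω)) ∂P < ⊤),
        ENNReal.ofReal (s * t - Real.log (∫ ω, Real.exp (s * Z ω) ∂P)) := funext hdef
      rw [he]
      refine lowerSemicontinuous_biSup fun s _ => Continuous.lowerSemicontinuous ?_
      exact ENNReal.continuous_ofReal.comp (by fun_prop)
    exact this.measurable
  have hfin : ∀ᵐ ω ∂P, h (Z ω) ≠ ⊤ := by
    rw [ae_iff]
    simp only [ne_eq, not_not]
    have hb : ∀ u : ℝ, P {ω | h (Z ω) = ⊤} ≤ ENNReal.ofReal (2 * Real.exp (-u)) := fun u =>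
      (measure_mono (fun ω (hω : h (Z ω) = ⊤) => by
        change ENNReal.ofReal u < h (Z ω)
        rw [hω]; exact ENNReal.ofReal_lt_top)).trans (htail u)
    have hl : Filter.Tendsto (fun u : ℝ => ENNReal.ofReal (2 * Real.exp (-u))) Filter.atTop
        (nhds 0) := by
      have := ENNReal.tendsto_ofReal ((Real.tendsto_exp_neg_atTop_nhds_zero).const_mul 2)
      simpa using this
    exact le_antisymm (ge_of_tendsto' hl hb) bot_le
  set f : Ω → ℝ := fun ω => (h (Z ω)).toReal with hf
  have hfm : Measurable f := (hmeas.comp hZ).ennreal_toReal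
  have hint : ∀ x : ℝ, ∫ t in (0:ℝ)..x, δ * Real.exp (δ * t) = Real.exp (δ * x) - 1 := by
    intro x
    have hd : ∀ t ∈ uIcc (0:ℝ) x, HasDerivAt (fun t => Real.exp (δ * t))
        (δ * Real.exp (δ * t)) t := by
      intro t _
      have := ((hasDerivAt_id t).const_mul δ).exp
      simpa [mul_comm] using this
    rw [intervalIntegral.integral_eq_sub_of_hasDerivAt hd
      (Continuous.intervalIntegrable (by fun_prop) _ _)]
    simp
  have heq : ∫⁻ ω, expEN (ENNReal.ofReal δ * h (Z ω)) ∂P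
      = ∫⁻ ω, (1 + ENNReal.ofReal (∫ t in (0:ℝ)..f ω, δ * Real.exp (δ * t))) ∂P := by
    apply lintegral_congr_ae
    filter_upwards [hfin] with ω hω
    have hne : ENNReal.ofReal δ * h (Z ω) ≠ ⊤ := ENNReal.mul_ne_top ENNReal.ofReal_ne_top hω
    have h0 : 0 ≤ δ * f ω := mul_nonneg hδ0 ENNReal.toReal_nonneg
    rw [expEN, if_neg hne, hint, ENNReal.toReal_mul, ENNReal.toReal_ofReal hδ0,
      ← ENNReal.ofReal_one, ← ENNReal.ofReal_add zero_le_one (by linarith [Real.one_le_exp h0])]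
    congr 1
    simp [hf]
  rw [heq, lintegral_add_left measurable_const]
  rw [lintegral_comp_eq_lintegral_meas_lt_mul P
    (Filter.Eventually.of_forall fun ω => ENNReal.toReal_nonneg) hfm.aemeasurable
    (fun t _ => Continuous.intervalIntegrable (by fun_prop) _ _)
    (Filter.Eventually.of_forall fun t => mul_nonneg hδ0 (Real.exp_pos _).le)]
  have hpos : 0 < 1 - δ := by linarith
  have hb : ∫⁻ t in Ioi (0:ℝ), P {ω | t < f ω} * ENNReal.ofReal (δ * Real.exp (δ * t))
      ≤ ∫⁻ t in Ioi (0:ℝ), ENNReal.ofReal (2 * δ * Real.exp (-(1 - δ) * t)) := by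
    apply setLIntegral_mono (by fun_prop)
    intro t ht
    have h1 : P {ω | t < f ω} ≤ ENNReal.ofReal (2 * Real.exp (-t)) := by
      refine (measure_mono ?_).trans (htail t)
      intro ω hω
      exact (ENNReal.ofReal_lt_iff_lt_toReal (le_of_lt ht) (by
        intro hT
        have : t < (h (Z ω)).toReal := hω
        rw [hT] at this
        simp at this
        exact absurd ht (not_lt.2 this.le))).2 hω
    refine (mul_le_mul_left h1 _).trans ?_
    rw [← ENNReal.ofReal_mul (by positivity)]
    apply ENNReal.ofReal_le_ofReal
    have : Real.exp (-(1 - δ) * t) = Real.exp (-t) * Real.exp (δ * t) := by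
      rw [← Real.exp_add]; congr 1; ring
    rw [this]
    apply le_of_eq; ring
  have hI : ∫⁻ t in Ioi (0:ℝ), ENNReal.ofReal (2 * δ * Real.exp (-(1 - δ) * t))
      = ENNReal.ofReal (2 * δ / (1 - δ)) := by
    rw [← ofReal_integral_eq_lintegral_ofReal]
    · rw [integral_const_mul, integral_exp_mul_Ioi (by linarith)]
      congr 1
      rw [mul_zero, Real.exp_zero, neg_div_neg_eq]
      ring
    · exact (integrableOn_exp_mul_Ioi (by linarith) 0).const_mul _
    · exact Filter.Eventually.of_forall fun t => by positivity
  refine (add_le_add_right (hb.trans hI.le) _).trans ?_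
  simp only [lintegral_const, measure_univ, mul_one]
  rw [← ENNReal.ofReal_one, ← ENNReal.ofReal_add zero_le_one (by positivity)]
  apply ENNReal.ofReal_le_ofReal
  apply le_of_eq
  field_simp
  ring

end
end

section
/- Let X be a Polish space, d a lower semicontinuous metric on X, p ≥ 1, and μ a Borel probability measure on X. Suppose γ is in the class C and ∫ exp[ γ( d(x_o,y)^p ) ] μ(dy) ≤ B < ∞ for some x_o ∈ X. Then the function t ↦ max(0, 2γ(2^{−p} t) − 2 log B) is a transportation function for the cost c = d^p; that is, 2γ(2^{−p} T_{d^p}(μ,ν)) − 2 log B ≤ H(ν|μ) for every Borel probability measure ν on X. -/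
open MeasureTheory ENNReal Set
open scoped NNReal ENNReal

noncomputable section

/-- The class 𝒞 of convex, nondecreasing, left continuous functions vanishing at 0,
extended to `ℝ≥0∞` (left continuity at `∞` encodes the convention `α ∞ = lim α`). -/
def ClassCFun (α : ℝ≥0∞ → ℝ≥0∞) : Prop :=
  Monotone α ∧ α 0 = 0 ∧
    (∀ (s t : ℝ≥0∞) (p q : ℝ≥0), p + q = 1 →
      α ((p : ℝ≥0∞) * s + (q : ℝ≥0∞) * t) ≤ (p : ℝ≥0∞) * α s + (q : ℝ≥0∞) * α t) ∧
    ∀ x : ℝ≥0∞, x ≠ 0 → α x = ⨆ y ∈ Set.Iio x, α y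

open scoped Classical in
/-- Relative entropy `H(ν|μ)`. -/
def relEntropy {X : Type*} [MeasurableSpace X] (ν μ : Measure X) : ℝ≥0∞ :=
  if ν ≪ μ ∧ Integrable (fun x => Real.log (ν.rnDeriv μ x).toReal) ν
  then ENNReal.ofReal (∫ x, Real.log (ν.rnDeriv μ x).toReal ∂ν) else ⊤

/-- Optimal transportation cost for the cost function `c`. -/
def optTransportCost {X : Type*} [MeasurableSpace X] (c : X → X → ℝ)
    (μ ν : Measure X) : ℝ≥0∞ :=
  ⨅ (π : Measure (X × X)) (_ : π.map Prod.fst = μ ∧ π.map Prod.snd = ν),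
    ∫⁻ p, ENNReal.ofReal (c p.1 p.2) ∂π

lemma classC_convexOn {γ : ℝ≥0∞ → ℝ≥0∞} (hγ : ClassCFun γ) :
    ConvexOn ℝ {x : ℝ | 0 ≤ x ∧ γ (ENNReal.ofReal x) ≠ ⊤}
      (fun x => (γ (ENNReal.ofReal x)).toReal) := by
  have key : ∀ x y : ℝ, 0 ≤ x → 0 ≤ y → ∀ a b : ℝ, 0 ≤ a → 0 ≤ b → a + b = 1 →
      γ (ENNReal.ofReal (a * x + b * y)) ≤
        ENNReal.ofReal a * γ (ENNReal.ofReal x) + ENNReal.ofReal b * γ (ENNReal.ofReal y) := by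
    intro x y hx hy a b ha hb hab
    rw [ENNReal.ofReal_add (by positivity) (by positivity), ENNReal.ofReal_mul ha,
      ENNReal.ofReal_mul hb]
    refine hγ.2.2.1 _ _ (Real.toNNReal a) (Real.toNNReal b) ?_
    rw [← Real.toNNReal_add ha hb, hab, Real.toNNReal_one]
  have fin : ∀ x y : ℝ, γ (ENNReal.ofReal x) ≠ ⊤ → γ (ENNReal.ofReal y) ≠ ⊤ → ∀ a b : ℝ,
      ENNReal.ofReal a * γ (ENNReal.ofReal x) + ENNReal.ofReal b * γ (ENNReal.ofReal y) ≠ ⊤ := by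
    intro x y hx hy a b
    exact ENNReal.add_ne_top.2 ⟨ENNReal.mul_ne_top ENNReal.ofReal_ne_top hx,
      ENNReal.mul_ne_top ENNReal.ofReal_ne_top hy⟩
  constructor
  · intro x hx y hy a b ha hb hab
    refine ⟨?_, ?_⟩
    · have := hx.1
      have := hy.1
      simp only [smul_eq_mul]
      positivity
    · exact ne_top_of_le_ne_top (fin x y hx.2 hy.2 a b) (key x y hx.1 hy.1 a b ha hb hab)
  · intro x hx y hy a b ha hb hab
    have h := ENNReal.toReal_mono (fin x y hx.2 hy.2 a b) (key x y hx.1 hy.1 a b ha hb hab)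
    rw [ENNReal.toReal_add (ENNReal.mul_ne_top ENNReal.ofReal_ne_top hx.2)
      (ENNReal.mul_ne_top ENNReal.ofReal_ne_top hy.2), ENNReal.toReal_mul, ENNReal.toReal_mul,
      ENNReal.toReal_ofReal ha, ENNReal.toReal_ofReal hb] at h
    simpa only [smul_eq_mul] using h

/-- Supporting line at a point below which and above which `γ` is finite. -/
lemma classC_support {γ : ℝ≥0∞ → ℝ≥0∞} (hγ : ClassCFun γ) {y w : ℝ} (hy : 0 < y) (hyw : y < w)
    (hw : γ (ENNReal.ofReal w) ≠ ⊤) :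
    ∃ a : ℝ≥0, ∀ z : ℝ≥0∞, z ≠ ⊤ →
      γ (ENNReal.ofReal y) + a * z ≤ γ z + a * ENNReal.ofReal y := by
  set S := {x : ℝ | 0 ≤ x ∧ γ (ENNReal.ofReal x) ≠ ⊤} with hS
  set φ := fun x : ℝ => (γ (ENNReal.ofReal x)).toReal with hφ
  have hc : ConvexOn ℝ S φ := classC_convexOn hγ
  have hsub : Set.Icc 0 w ⊆ S := fun x hx =>
    ⟨hx.1, ne_top_of_le_ne_top hw (hγ.1 (ENNReal.ofReal_le_ofReal hx.2))⟩
  have hyi : y ∈ interior S := by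
    apply interior_mono hsub
    rw [interior_Icc]
    exact ⟨hy, hyw⟩
  have hyS : y ∈ S := interior_subset hyi
  set a := derivWithin φ (Set.Ioi y) y with ha
  have hline : ∀ z ∈ S, φ y + a * (z - y) ≤ φ z := by
    intro z hz
    rcases lt_trichotomy y z with h | h | h
    · have := hc.rightDeriv_le_slope_of_mem_interior hyi hz h
      rw [slope_def_field, le_div_iff₀ (by linarith)] at this
      linarith
    · subst h; simp
    · have h1 := hc.slope_le_leftDeriv_of_mem_interior hz hyi h
      have h2 := h1.trans (hc.leftDeriv_le_rightDeriv_of_mem_interior hyi)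
      rw [slope_def_field, div_le_iff₀ (by linarith)] at h2
      linarith
  have ha0 : 0 ≤ a := by
    have h0 := hline 0 (hsub ⟨le_rfl, by linarith⟩)
    have h1 : φ 0 = 0 := by simp [hφ, hγ.2.1]
    have h2 : 0 ≤ φ y := ENNReal.toReal_nonneg
    rw [h1] at h0
    by_contra hneg
    push Not at hneg
    nlinarith
  refine ⟨Real.toNNReal a, fun z hz => ?_⟩
  by_cases hγz : γ z = ⊤
  · simp [hγz]
  have hzS : z.toReal ∈ S := ⟨ENNReal.toReal_nonneg, by rwa [ENNReal.ofReal_toReal hz]⟩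
  have h := hline _ hzS
  have e1 : γ (ENNReal.ofReal y) = ENNReal.ofReal (φ y) := by
    rw [hφ]; exact (ENNReal.ofReal_toReal hyS.2).symm
  have e2 : γ z = ENNReal.ofReal (φ z.toReal) := by
    simp only [hφ]; rw [ENNReal.ofReal_toReal hz, ENNReal.ofReal_toReal hγz]
  have e3 : ((Real.toNNReal a : ℝ≥0) : ℝ≥0∞) = ENNReal.ofReal a := rfl
  have e4 : z = ENNReal.ofReal z.toReal := (ENNReal.ofReal_toReal hz).symm
  have p1 : 0 ≤ φ y := ENNReal.toReal_nonneg
  have p2 : 0 ≤ φ z.toReal := ENNReal.toReal_nonneg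
  have p3 : 0 ≤ z.toReal := ENNReal.toReal_nonneg
  rw [e1, e2, e3]
  nth_rw 1 [e4]
  rw [← ENNReal.ofReal_mul ha0, ← ENNReal.ofReal_mul ha0,
    ← ENNReal.ofReal_add p1 (by positivity), ← ENNReal.ofReal_add p2 (by positivity)]
  apply ENNReal.ofReal_le_ofReal
  linarith

/-- Jensen's inequality for the class `C`. -/
lemma classC_jensen {X : Type*} [MeasurableSpace X] (μ : Measure X) [IsProbabilityMeasure μ]
    {γ : ℝ≥0∞ → ℝ≥0∞} (hγ : ClassCFun γ) {g : X → ℝ≥0∞} (hg : Measurable g)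
    (hfin : ∀ x, g x ≠ ⊤) :
    γ (∫⁻ x, g x ∂μ) ≤ ∫⁻ x, γ (g x) ∂μ := by
  have hγm : Measurable γ := hγ.1.measurable
  by_cases hA : ∫⁻ x, g x ∂μ = 0
  · rw [hA, hγ.2.1]; exact zero_le
  by_cases hI : ∫⁻ x, γ (g x) ∂μ = ⊤
  · rw [hI]; exact le_top
  rw [hγ.2.2.2 _ hA]
  refine iSup₂_le fun y hy => ?_
  have hy' : y < ∫⁻ x, g x ∂μ := hy
  by_cases hy0 : y = 0
  · rw [hy0, hγ.2.1]; exact zero_le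
  have hytop : y ≠ ⊤ := hy'.ne_top
  have hae : ∀ᵐ x ∂μ, γ (g x) < ⊤ := ae_lt_top (hγm.comp hg) hI
  obtain ⟨x, hx1, hx2⟩ : ∃ x, y < g x ∧ γ (g x) < ⊤ := by
    by_contra hcon
    push Not at hcon
    have : ∀ᵐ x ∂μ, g x ≤ y := by
      filter_upwards [hae] with x hx
      by_contra hlt
      exact absurd hx (not_lt.2 (hcon x (not_le.1 hlt)))
    have h2 : ∫⁻ x, g x ∂μ ≤ y := by
      calc ∫⁻ x, g x ∂μ ≤ ∫⁻ _, y ∂μ := lintegral_mono_ae this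
        _ = y := by simp
    exact absurd hy' (not_lt.2 h2)
  obtain ⟨a, ha⟩ := classC_support hγ (y := y.toReal) (w := (g x).toReal)
    (ENNReal.toReal_pos hy0 hytop) ((ENNReal.toReal_lt_toReal hytop (hfin x)).2 hx1)
    (by rw [ENNReal.ofReal_toReal (hfin x)]; exact hx2.ne)
  rw [ENNReal.ofReal_toReal hytop] at ha
  have hint : γ y + a * ∫⁻ x, g x ∂μ ≤ ∫⁻ x, γ (g x) ∂μ + a * y := by
    calc γ y + a * ∫⁻ x, g x ∂μ = ∫⁻ x, (γ y + a * g x) ∂μ := by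
          rw [lintegral_add_left measurable_const, lintegral_const_mul _ hg]; simp
      _ ≤ ∫⁻ x, (γ (g x) + a * y) ∂μ := lintegral_mono fun x => ha _ (hfin x)
      _ = _ := by rw [lintegral_add_right _ measurable_const]; simp
  have h3 : γ y + a * y ≤ ∫⁻ x, γ (g x) ∂μ + a * y := by
    refine le_trans ?_ hint
    gcongr
  exact (ENNReal.add_le_add_iff_right (ENNReal.mul_ne_top ENNReal.coe_ne_top hytop)).1 h3

lemma measurable_expEN : Measurable expEN := by
  unfold expEN
  refine Measurable.ite (measurableSet_singleton _) measurable_const ?_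
  exact ENNReal.measurable_ofReal.comp (Real.measurable_exp.comp ENNReal.measurable_toReal)

/-- Entropic duality inequality. -/
lemma dual_entropy {X : Type*} [MeasurableSpace X] (ν : Measure X) [IsProbabilityMeasure ν]
    {f : X → ℝ≥0∞} (hf : Measurable f) {L : X → ℝ} (hLm : Measurable L) (hL : Integrable L ν)
    {B : ℝ} (hB0 : 0 < B)
    (hB : ∫⁻ x, expEN (f x) * ENNReal.ofReal (Real.exp (-L x)) ∂ν ≤ ENNReal.ofReal B) :
    ∫⁻ x, f x ∂ν ≤ ENNReal.ofReal (∫ x, L x ∂ν) + ENNReal.ofReal (Real.log B) := by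
  have hm : Measurable fun x => expEN (f x) * ENNReal.ofReal (Real.exp (-L x)) :=
    (measurable_expEN.comp hf).mul
      (ENNReal.measurable_ofReal.comp (Real.measurable_exp.comp hLm.neg))
  have hfin : ∀ᵐ x ∂ν, f x ≠ ⊤ := by
    filter_upwards [ae_lt_top hm (ne_top_of_le_ne_top ENNReal.ofReal_ne_top hB)] with x hx htop
    have h0 : ENNReal.ofReal (Real.exp (-L x)) ≠ 0 := by
      simp [Real.exp_pos]
    rw [htop, expEN, if_pos rfl, ENNReal.top_mul h0] at hx
    exact lt_irrefl _ hx
  set k : X → ℝ := fun x => Real.exp ((f x).toReal - L x) with hk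
  have hkm : Measurable k := Real.measurable_exp.comp (hf.ennreal_toReal.sub hLm)
  have hkl : ∫⁻ x, ENNReal.ofReal (k x) ∂ν ≤ ENNReal.ofReal B := by
    refine le_trans (le_of_eq (lintegral_congr_ae ?_)) hB
    filter_upwards [hfin] with x hx
    rw [expEN, if_neg hx, ← ENNReal.ofReal_mul (Real.exp_pos _).le, ← Real.exp_add]
    rfl
  have hkpos : 0 ≤ᵐ[ν] k := Filter.Eventually.of_forall fun x => (Real.exp_pos _).le
  have hkint : Integrable k ν := by
    refine ⟨hkm.aestronglyMeasurable, ?_⟩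
    rw [hasFiniteIntegral_iff_ofReal hkpos]
    exact lt_of_le_of_lt hkl ENNReal.ofReal_lt_top
  have hkB : ∫ x, k x ∂ν ≤ B := by
    rw [integral_eq_lintegral_of_nonneg_ae hkpos hkm.aestronglyMeasurable]
    exact ENNReal.toReal_le_of_le_ofReal hB0.le hkl
  have hpt : ∀ x, (f x).toReal ≤ L x + (Real.log B - 1) + k x / B := by
    intro x
    have h1 := Real.add_one_le_exp ((f x).toReal - L x - Real.log B)
    have h2 : Real.exp ((f x).toReal - L x - Real.log B) = k x / B := by
      rw [Real.exp_sub, Real.exp_log hB0]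
    linarith
  have hRint : Integrable (fun x => L x + (Real.log B - 1) + k x / B) ν :=
    (hL.add (integrable_const _)).add (hkint.div_const _)
  have hR : ∫ x, (L x + (Real.log B - 1) + k x / B) ∂ν ≤ ∫ x, L x ∂ν + Real.log B := by
    have hLc : Integrable (fun x => L x + (Real.log B - 1)) ν := hL.add (integrable_const _)
    rw [integral_add hLc (hkint.div_const _),
      integral_add hL (integrable_const _), integral_div]
    have : (∫ x, k x ∂ν) / B ≤ 1 := (div_le_one hB0).2 hkB
    simp only [integral_const, probReal_univ, one_smul]
    linarith
  have hRpos : 0 ≤ᵐ[ν] fun x => L x + (Real.log B - 1) + k x / B :=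
    Filter.Eventually.of_forall fun x => le_trans ENNReal.toReal_nonneg (hpt x)
  calc ∫⁻ x, f x ∂ν ≤ ∫⁻ x, ENNReal.ofReal (L x + (Real.log B - 1) + k x / B) ∂ν := by
        refine lintegral_mono_ae ?_
        filter_upwards [hfin] with x hx
        rw [← ENNReal.ofReal_toReal hx]
        exact ENNReal.ofReal_le_ofReal (hpt x)
    _ = ENNReal.ofReal (∫ x, (L x + (Real.log B - 1) + k x / B) ∂ν) :=
        (ofReal_integral_eq_lintegral_ofReal hRint hRpos).symm
    _ ≤ ENNReal.ofReal (∫ x, L x ∂ν + Real.log B) := ENNReal.ofReal_le_ofReal hR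
    _ ≤ _ := ENNReal.ofReal_add_le

lemma one_le_expEN (v : ℝ≥0∞) : 1 ≤ expEN v := by
  unfold expEN
  split_ifs
  · exact le_top
  · rw [← ENNReal.ofReal_one]
    exact ENNReal.ofReal_le_ofReal (Real.one_le_exp ENNReal.toReal_nonneg)

lemma lintegral_exp_rnDeriv_le {X : Type*} [MeasurableSpace X] (μ ν : Measure X)
    [IsProbabilityMeasure μ] [IsProbabilityMeasure ν] (hac : ν ≪ μ)
    {F : X → ℝ≥0∞} (hF : Measurable F) :
    ∫⁻ x, F x * ENNReal.ofReal (Real.exp (-Real.log (ν.rnDeriv μ x).toReal)) ∂ν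
      ≤ ∫⁻ x, F x ∂μ := by
  have hm : Measurable fun x =>
      F x * ENNReal.ofReal (Real.exp (-Real.log (ν.rnDeriv μ x).toReal)) := by
    have := Measure.measurable_rnDeriv ν μ
    fun_prop
  rw [← lintegral_rnDeriv_mul hac hm.aemeasurable]
  refine lintegral_mono_ae ?_
  filter_upwards [Measure.rnDeriv_lt_top ν μ] with x hx
  by_cases h0 : ν.rnDeriv μ x = 0
  · rw [h0, zero_mul]; exact zero_le
  have hpos : 0 < (ν.rnDeriv μ x).toReal := ENNReal.toReal_pos h0 hx.ne
  rw [Real.exp_neg, Real.exp_log hpos, ENNReal.ofReal_inv_of_pos hpos,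
    ENNReal.ofReal_toReal hx.ne, mul_left_comm, ENNReal.mul_inv_cancel h0 hx.ne, mul_one]

lemma cost_pointwise {a b c p : ℝ} (ha : 0 ≤ a) (hb : 0 ≤ b) (hc : 0 ≤ c) (hcab : c ≤ a + b)
    (hp : 1 ≤ p) :
    ENNReal.ofReal ((2 : ℝ) ^ (-p)) * ENNReal.ofReal (c ^ p) ≤
      ((1 / 2 : ℝ≥0) : ℝ≥0∞) * ENNReal.ofReal (a ^ p) +
        ((1 / 2 : ℝ≥0) : ℝ≥0∞) * ENNReal.ofReal (b ^ p) := by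
  have h := (convexOn_rpow hp).2 (Set.mem_Ici.2 ha) (Set.mem_Ici.2 hb)
    (by norm_num : (0 : ℝ) ≤ 1 / 2) (by norm_num : (0 : ℝ) ≤ 1 / 2) (by norm_num)
  simp only [smul_eq_mul] at h
  have h2 : (2 : ℝ) ^ (-p) * c ^ p ≤ 1 / 2 * a ^ p + 1 / 2 * b ^ p := by
    refine le_trans ?_ h
    rw [Real.rpow_neg (by norm_num), ← Real.inv_rpow (by norm_num),
      ← Real.mul_rpow (by norm_num) hc]
    apply Real.rpow_le_rpow (by positivity) _ (by linarith)
    linarith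
  have e : ((1 / 2 : ℝ≥0) : ℝ≥0∞) = ENNReal.ofReal (1 / 2) := by
    rw [ENNReal.ofReal]
    congr 1
    ext
    simp
  rw [e, ← ENNReal.ofReal_mul (by positivity), ← ENNReal.ofReal_mul (by norm_num),
    ← ENNReal.ofReal_mul (by norm_num), ← ENNReal.ofReal_add (by positivity) (by positivity)]
  exact ENNReal.ofReal_le_ofReal h2

/-- Integral criterion for the cost `c = d^p`: if `∫ exp[γ(d(x₀,y)^p)] dμ ≤ B` then
`2γ(2^{-p} 𝒯_{d^p}(μ,ν)) − 2 log B ≤ H(ν|μ)`. -/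
theorem transportation_function_dp
    {X : Type*} [TopologicalSpace X] [PolishSpace X] [MeasurableSpace X] [BorelSpace X]
    (d : X → X → ℝ)
    (hd_symm : ∀ x y, d x y = d y x)
    (hd_tri : ∀ x y z, d x z ≤ d x y + d y z)
    (hd_self : ∀ x, d x x = 0)
    (hd_sep : ∀ x y, d x y = 0 → x = y)
    (hd_nonneg : ∀ x y, 0 ≤ d x y)
    (hd_lsc : LowerSemicontinuous fun p : X × X => d p.1 p.2)
    (p : ℝ) (hp : 1 ≤ p)
    (μ : Measure X) [IsProbabilityMeasure μ]
    (γ : ℝ≥0∞ → ℝ≥0∞) (hγ : ClassCFun γ)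
    (B : ℝ) (x₀ : X)
    (hB : ∫⁻ y, expEN (γ (ENNReal.ofReal (d x₀ y ^ p))) ∂μ ≤ ENNReal.ofReal B) :
    ∀ ν : Measure X, IsProbabilityMeasure ν →
      2 * γ (ENNReal.ofReal ((2 : ℝ) ^ (-p)) *
          optTransportCost (fun x y => d x y ^ p) μ ν) ≤
        relEntropy ν μ + ENNReal.ofReal (2 * Real.log B) := by
  intro ν hν
  have hp0 : 0 ≤ p := by linarith
  have hdm : Measurable (d x₀) := by
    have : LowerSemicontinuous (fun y => d x₀ y) :=
      hd_lsc.comp (f := fun q : X × X => d q.1 q.2) (g := fun y => (x₀, y)) (by fun_prop)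
    exact this.measurable
  set g : X → ℝ≥0∞ := fun y => ENNReal.ofReal (d x₀ y ^ p) with hg
  have hgm : Measurable g := by
    rw [hg]; fun_prop
  have hγm : Measurable γ := hγ.1.measurable
  have hgtop : ∀ x, g x ≠ ⊤ := fun x => ENNReal.ofReal_ne_top
  have hfm : Measurable fun x => γ (g x) := hγm.comp hgm
  have hB1 : 1 ≤ B := by
    rw [← ENNReal.one_le_ofReal]
    refine le_trans ?_ hB
    calc (1 : ℝ≥0∞) = ∫⁻ _, 1 ∂μ := by simp
      _ ≤ _ := lintegral_mono fun x => one_le_expEN _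
  have hlog : 0 ≤ Real.log B := Real.log_nonneg hB1
  by_cases hH : ν ≪ μ ∧ Integrable (fun x => Real.log (ν.rnDeriv μ x).toReal) ν
  swap
  · rw [relEntropy, if_neg hH, top_add]; exact le_top
  rw [relEntropy, if_pos hH]
  -- transport cost bound by the product coupling
  have hT : ENNReal.ofReal ((2 : ℝ) ^ (-p)) * optTransportCost (fun x y => d x y ^ p) μ ν ≤
      ((1 / 2 : ℝ≥0) : ℝ≥0∞) * ∫⁻ x, g x ∂μ + ((1 / 2 : ℝ≥0) : ℝ≥0∞) * ∫⁻ x, g x ∂ν := by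
    have h1 : optTransportCost (fun x y => d x y ^ p) μ ν ≤
        ∫⁻ q, ENNReal.ofReal (d q.1 q.2 ^ p) ∂(μ.prod ν) := by
      refine iInf₂_le (μ.prod ν) ⟨?_, ?_⟩
      · rw [Measure.map_fst_prod]; simp
      · rw [Measure.map_snd_prod]; simp
    calc _ ≤ ENNReal.ofReal ((2 : ℝ) ^ (-p)) *
          ∫⁻ q, ENNReal.ofReal (d q.1 q.2 ^ p) ∂(μ.prod ν) := by gcongr
      _ ≤ ∫⁻ q, ENNReal.ofReal ((2 : ℝ) ^ (-p)) * ENNReal.ofReal (d q.1 q.2 ^ p) ∂(μ.prod ν) :=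
          lintegral_const_mul_le _ _
      _ ≤ ∫⁻ q, (((1 / 2 : ℝ≥0) : ℝ≥0∞) * g q.1 + ((1 / 2 : ℝ≥0) : ℝ≥0∞) * g q.2)
          ∂(μ.prod ν) := by
          refine lintegral_mono fun q => ?_
          refine cost_pointwise (hd_nonneg _ _) (hd_nonneg _ _) (hd_nonneg _ _) ?_ hp
          rw [hd_symm x₀ q.1]
          exact hd_tri _ _ _
      _ = _ := by
          have m1 : Measurable fun q : X × X => g q.1 := hgm.comp measurable_fst
          have m2 : Measurable fun q : X × X => g q.2 := hgm.comp measurable_snd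
          rw [lintegral_add_left (m1.const_mul _), lintegral_const_mul _ m1,
            lintegral_const_mul _ m2]
          congr 2
          · rw [lintegral_prod _ m1.aemeasurable]; simp
          · rw [lintegral_prod _ m2.aemeasurable]; simp
  have hconv := (hγ.1 hT).trans (hγ.2.2.1 _ _ (1 / 2) (1 / 2) (by norm_num))
  have hμ : ∫⁻ x, γ (g x) ∂μ ≤ ENNReal.ofReal (Real.log B) := by
    have := dual_entropy μ hfm (L := fun _ => 0) measurable_const (integrable_zero _ _ _)
      (B := B) (by linarith) (by simpa using hB)
    simpa using this
  have hν' : ∫⁻ x, γ (g x) ∂ν ≤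
      ENNReal.ofReal (∫ x, Real.log (ν.rnDeriv μ x).toReal ∂ν) + ENNReal.ofReal (Real.log B) := by
    refine dual_entropy ν hfm ?_ hH.2 (by linarith) ?_
    · exact Real.measurable_log.comp (Measure.measurable_rnDeriv ν μ).ennreal_toReal
    · exact (lintegral_exp_rnDeriv_le μ ν hH.1 (measurable_expEN.comp hfm)).trans hB
  have h2 : (2 : ℝ≥0∞) * ((1 / 2 : ℝ≥0) : ℝ≥0∞) = 1 := by
    have : (2 : ℝ≥0) * (1 / 2) = 1 := by norm_num
    exact_mod_cast congrArg ((↑) : ℝ≥0 → ℝ≥0∞) this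
  calc _ ≤ 2 * (((1 / 2 : ℝ≥0) : ℝ≥0∞) * γ (∫⁻ x, g x ∂μ) +
        ((1 / 2 : ℝ≥0) : ℝ≥0∞) * γ (∫⁻ x, g x ∂ν)) := by gcongr
    _ = γ (∫⁻ x, g x ∂μ) + γ (∫⁻ x, g x ∂ν) := by
        rw [mul_add, ← mul_assoc, ← mul_assoc, h2, one_mul, one_mul]
    _ ≤ ENNReal.ofReal (Real.log B) +
        (ENNReal.ofReal (∫ x, Real.log (ν.rnDeriv μ x).toReal ∂ν) +
          ENNReal.ofReal (Real.log B)) :=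
        add_le_add ((classC_jensen μ hγ hgm hgtop).trans hμ)
          ((classC_jensen ν hγ hgm hgtop).trans hν')
    _ = _ := by
        rw [two_mul, ENNReal.ofReal_add hlog hlog]
        ring


end
end

section
/- Let X be a Polish space, μ a Borel probability measure on X, and c : X × X → [0,∞) a cost function satisfying c(x,x) = 0 for all x and c(x,y) ≤ χ(x) + χ(y) for all x,y, where χ is a nonnegative measurable function with ∫ e^{δ_o χ} dμ < ∞ for some δ_o > 0. Then the Orlicz norm ‖χ‖_ρ is finite and the function α_0(t) = (√(t/‖χ‖_ρ + 1) − 1)² is a transportation function for c and μ; that is, α_0(T_c(μ,ν)) ≤ H(ν|μ) for every Borel probability measure ν on X. In particular, for every a ≥ 0 such that ∫ e^{aχ} dμ ≤ 2, the function t ↦ (√(a t + 1) − 1)² is a transportation function for c and μ. -/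
open MeasureTheory ENNReal Set
open scoped NNReal ENNReal

noncomputable section

/-- Orlicz norm for the Young function `ρ(s) = e^{|s|} − 1`. -/
def orliczNormE {X : Type*} [MeasurableSpace X] (μ : Measure X) (φ : X → ℝ) : ℝ≥0∞ :=
  sInf {b : ℝ≥0∞ | 0 < b ∧ ∫⁻ x, ENNReal.ofReal (Real.exp (|φ x| / b.toReal)) ∂μ ≤ 2}

/-- Left-continuous increasing extension to `ℝ≥0∞` of a real function on `[0,∞)`. -/
def extFun (f : ℝ → ℝ) (v : ℝ≥0∞) : ℝ≥0∞ :=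
  ⨆ (t : ℝ≥0) (_ : (t : ℝ≥0∞) ≤ v), ENNReal.ofReal (f (t : ℝ))

open InformationTheory

lemma aux_conv (s x : ℝ) (hs0 : 0 ≤ s) (hs1 : s ≤ 1) :
    Real.exp (s * x) ≤ 1 - s + s * Real.exp x := by
  have h := convexOn_exp.2 (mem_univ (0:ℝ)) (mem_univ x) (sub_nonneg.2 hs1) hs0 (by ring)
  simpa using h

lemma aux_sq (s x : ℝ) (hs0 : 0 ≤ s) (hs1 : s ≤ 1) (hx : 0 ≤ x) :
    Real.exp (s * x) - 1 - s * x ≤ s ^ 2 * (Real.exp x - 1 - x) := by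
  have hd : ∀ y : ℝ, HasDerivAt
      (fun x => s ^ 2 * (Real.exp x - 1 - x) - (Real.exp (s * x) - 1 - s * x))
      (s ^ 2 * (Real.exp y - 1) - (Real.exp (s * y) * (s * 1) - s * 1)) y := by
    intro y
    have h1 := (((Real.hasDerivAt_exp y).sub_const 1).sub (hasDerivAt_id y)).const_mul (s ^ 2)
    have h2 := (((hasDerivAt_id y).const_mul s).exp.sub_const 1).sub ((hasDerivAt_id y).const_mul s)
    exact h1.sub h2
  have hm : Monotone
      (fun x => s ^ 2 * (Real.exp x - 1 - x) - (Real.exp (s * x) - 1 - s * x)) := by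
    apply monotone_of_deriv_nonneg (fun y => (hd y).differentiableAt)
    intro y
    rw [(hd y).deriv]
    nlinarith [mul_le_mul_of_nonneg_left (aux_conv s y hs0 hs1) hs0]
  have := hm hx
  simp at this
  linarith

lemma aux_young (f y : ℝ) (hf : 0 ≤ f) : f * y - y ≤ klFun f + (Real.exp y - 1 - y) := by
  rw [klFun_apply]
  rcases hf.eq_or_lt with rfl | hf
  · simp
    linarith [Real.exp_nonneg y]
  · have h := Real.add_one_le_exp (y - Real.log f)
    rw [Real.exp_sub, Real.exp_log hf, le_div_iff₀ hf] at h
    nlinarith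

lemma aux_pt (f s x : ℝ) (hf : 0 ≤ f) (hs0 : 0 ≤ s) (hs1 : s ≤ 1) (hx : 0 ≤ x) :
    s * (x * |f - 1|) ≤ klFun f + s ^ 2 * (Real.exp x - 1) := by
  have h1 := aux_sq s x hs0 hs1 hx
  have hsx : 0 ≤ s * x := by positivity
  have h4 : 0 ≤ s ^ 2 * x := by positivity
  rcases le_total 0 (f - 1) with h | h
  · rw [abs_of_nonneg h]
    nlinarith [aux_young f (s * x) hf]
  · rw [abs_of_nonpos h]
    have h2 := aux_young f (-(s * x)) hf
    have h3 := Real.self_le_sinh_iff.2 hsx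
    rw [Real.sinh_eq] at h3
    nlinarith

lemma aux_final (a t H : ℝ) (ha : 0 ≤ a) (ht : 0 ≤ t) (hH : 0 ≤ H)
    (h : ∀ s : ℝ, 0 < s → s ≤ 1 → s * (a * t) ≤ H + s ^ 2) :
    a * t ≤ H + 2 * √H := by
  have hat : 0 ≤ a * t := by positivity
  rcases hH.eq_or_lt with rfl | hH
  · simp
    apply _root_.le_of_forall_pos_le_add
    intro e he
    have h1 := h (min e 1) (by positivity) (min_le_right _ _)
    have h2 : 0 < min e 1 := by positivity
    have h3 : a * t ≤ min e 1 := by nlinarith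
    linarith [min_le_left e 1]
  · set r := √H with hr
    have hr0 : 0 < r := Real.sqrt_pos.2 hH
    have hr2 : r ^ 2 = H := Real.sq_sqrt hH.le
    rcases le_total r 1 with h1 | h1
    · have := h r hr0 h1
      nlinarith
    · have := h 1 one_pos le_rfl
      nlinarith

lemma aux_sqrt (u H : ℝ) (hu : 0 ≤ u) (hH : 0 ≤ H) (h : u ≤ H + 2 * √H) :
    (√(u + 1) - 1) ^ 2 ≤ H := by
  have h1 : √(u + 1) ≤ √H + 1 := by
    apply Real.sqrt_le_iff.2
    refine ⟨by positivity, ?_⟩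
    nlinarith [Real.sq_sqrt hH]
  have h2 : 1 ≤ √(u + 1) := Real.one_le_sqrt.2 (by linarith)
  nlinarith [Real.sq_sqrt hH, Real.sqrt_nonneg H]

lemma aux_relEntropy {X : Type*} [MeasurableSpace X] (ν μ : Measure X)
    [IsProbabilityMeasure μ] [IsProbabilityMeasure ν] (hac : ν ≪ μ)
    (hi : Integrable (fun x => Real.log (ν.rnDeriv μ x).toReal) ν) :
    relEntropy ν μ = klDiv ν μ := by
  rw [relEntropy, if_pos ⟨hac, hi⟩, klDiv_of_ac_of_integrable hac hi]
  simp [llr]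

lemma aux_cost {X : Type*} [MeasurableSpace X] (μ ν : Measure X)
    [IsProbabilityMeasure μ] [IsProbabilityMeasure ν] (hac : ν ≪ μ)
    (c : X → X → ℝ) (hcdiag : ∀ x, c x x = 0)
    (χ : X → ℝ) (hχmeas : Measurable χ) (hχ0 : ∀ x, 0 ≤ χ x)
    (hcχ : ∀ x y, c x y ≤ χ x + χ y) :
    optTransportCost c μ ν ≤
      ∫⁻ x, ENNReal.ofReal (χ x * |(ν.rnDeriv μ x).toReal - 1|) ∂μ := by
  set f := ν.rnDeriv μ with hf
  have hfm : Measurable f := Measure.measurable_rnDeriv ν μ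
  have hν : μ.withDensity f = ν := Measure.withDensity_rnDeriv_eq ν μ hac
  set m := μ.withDensity (fun x => min (f x) 1) with hm
  set A := μ.withDensity (fun x => 1 - f x) with hA
  set B := μ.withDensity (fun x => f x - 1) with hB
  have hmA : m + A = μ := by
    rw [hm, hA, ← withDensity_add_left (by fun_prop)]
    conv_rhs => rw [← withDensity_one (μ := μ)]
    congr 1
    ext x
    simp only [Pi.add_apply, Pi.one_apply]
    rcases le_total (f x) 1 with h | h
    · rw [min_eq_left h, add_tsub_cancel_of_le h]
    · rw [min_eq_right h, tsub_eq_zero_of_le h, add_zero]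
  have hmB : m + B = ν := by
    rw [hm, hB, ← withDensity_add_left (by fun_prop)]
    conv_rhs => rw [← hν]
    congr 1
    ext x
    simp only [Pi.add_apply]
    rcases le_total (f x) 1 with h | h
    · rw [min_eq_left h, tsub_eq_zero_of_le h, add_zero]
    · rw [min_eq_right h, add_tsub_cancel_of_le h]
  have hmle : m ≤ μ := by rw [← hmA]; exact Measure.le_add_right le_rfl
  have hAle : A ≤ μ := by rw [← hmA]; exact Measure.le_add_left le_rfl
  have hBle : B ≤ ν := by rw [← hmB]; exact Measure.le_add_left le_rfl
  have : IsFiniteMeasure m := isFiniteMeasure_of_le μ hmle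
  have : IsFiniteMeasure A := isFiniteMeasure_of_le μ hAle
  have : IsFiniteMeasure B := isFiniteMeasure_of_le ν hBle
  have hAB : B univ = A univ := by
    have h1 : m univ + A univ = 1 := by
      rw [← Measure.add_apply, hmA]; simp
    have h2 : m univ + B univ = 1 := by
      rw [← Measure.add_apply, hmB]; simp
    exact (ENNReal.add_right_inj (measure_ne_top m univ)).1 (h2.trans h1.symm)
  set k := A univ with hk
  have hkt : k ≠ ⊤ := measure_ne_top A univ
  have hkA : (k⁻¹ * k) • A = A := by
    by_cases h0 : k = 0
    · rw [Measure.measure_univ_eq_zero.1 h0]; simp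
    · rw [ENNReal.inv_mul_cancel h0 hkt, one_smul]
  have hkB : (k⁻¹ * k) • B = B := by
    by_cases h0 : k = 0
    · have : B = 0 := Measure.measure_univ_eq_zero.1 (hAB.trans h0)
      rw [this]; simp
    · rw [ENNReal.inv_mul_cancel h0 hkt, one_smul]
  have hdm : Measurable (fun x : X => (x, x)) := by fun_prop
  have hfst : (m.map (fun x => (x, x)) + k⁻¹ • A.prod B).map Prod.fst = μ := by
    rw [Measure.map_add _ _ measurable_fst, Measure.map_smul, Measure.map_map measurable_fst hdm,
      Measure.map_fst_prod, hAB, smul_smul, hkA]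
    have : (Prod.fst ∘ fun x : X => (x, x)) = id := rfl
    rw [this, Measure.map_id, hmA]
  have hsnd : (m.map (fun x => (x, x)) + k⁻¹ • A.prod B).map Prod.snd = ν := by
    rw [Measure.map_add _ _ measurable_snd, Measure.map_smul, Measure.map_map measurable_snd hdm,
      Measure.map_snd_prod, smul_smul, hkB]
    have : (Prod.snd ∘ fun x : X => (x, x)) = id := rfl
    rw [this, Measure.map_id, hmB]
  refine (iInf₂_le (m.map (fun x => (x, x)) + k⁻¹ • A.prod B) ⟨hfst, hsnd⟩).trans ?_
  · have hχm : Measurable (fun x => ENNReal.ofReal (χ x)) := hχmeas.ennreal_ofReal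
    have hd0 : ∫⁻ p, ENNReal.ofReal (c p.1 p.2) ∂(m.map (fun x => (x, x))) = 0 := by
      refine le_antisymm ((lintegral_map_le _ _).trans ?_) zero_le
      simp [hcdiag]
    have hp : ∫⁻ p, ENNReal.ofReal (c p.1 p.2) ∂(A.prod B) ≤
        k * (∫⁻ x, ENNReal.ofReal (χ x) ∂A) + k * ∫⁻ x, ENNReal.ofReal (χ x) ∂B := by
      calc _ ≤ ∫⁻ p, (ENNReal.ofReal (χ p.1) + ENNReal.ofReal (χ p.2)) ∂(A.prod B) := by
            apply lintegral_mono
            intro p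
            simp only
            rw [← ENNReal.ofReal_add (hχ0 _) (hχ0 _)]
            exact ENNReal.ofReal_le_ofReal (hcχ _ _)
        _ = _ := by
            rw [lintegral_add_left (by fun_prop)]
            congr 1
            · rw [lintegral_prod _ (by fun_prop)]
              simp only [lintegral_const]
              rw [lintegral_mul_const _ hχm, hAB, mul_comm]
            · rw [lintegral_prod _ (by fun_prop)]
              simp only [lintegral_const]
              rw [mul_comm]
    rw [lintegral_add_measure, hd0, zero_add, lintegral_smul_measure]
    calc _ ≤ k⁻¹ * (k * (∫⁻ x, ENNReal.ofReal (χ x) ∂A) + k * ∫⁻ x, ENNReal.ofReal (χ x) ∂B) := by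
          rw [smul_eq_mul]; gcongr
      _ ≤ (∫⁻ x, ENNReal.ofReal (χ x) ∂A) + ∫⁻ x, ENNReal.ofReal (χ x) ∂B := by
          rw [← mul_add, ← mul_assoc]
          exact mul_le_of_le_one_left zero_le (ENNReal.inv_mul_le_one k)
      _ = ∫⁻ x, ((1 - f x) * ENNReal.ofReal (χ x) + (f x - 1) * ENNReal.ofReal (χ x)) ∂μ := by
          rw [lintegral_add_left (by fun_prop), hA, hB,
            lintegral_withDensity_eq_lintegral_mul _ (by fun_prop) hχm,
            lintegral_withDensity_eq_lintegral_mul _ (by fun_prop) hχm]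
          rfl
      _ ≤ _ := by
          apply lintegral_mono_ae
          filter_upwards [Measure.rnDeriv_lt_top ν μ] with x hx
          have hx' : f x ≠ ⊤ := hx.ne
          rw [ENNReal.ofReal_mul (hχ0 x), ← add_mul, mul_comm]
          gcongr
          change _ ≤ ENNReal.ofReal |(f x).toReal - 1|
          have h3 : f x = ENNReal.ofReal (f x).toReal := (ENNReal.ofReal_toReal hx').symm
          set r := (f x).toReal
          have hr : 0 ≤ r := ENNReal.toReal_nonneg
          rw [h3, ← ENNReal.ofReal_one, ← ENNReal.ofReal_sub _ hr, ← ENNReal.ofReal_sub _ zero_le_one]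
          rcases le_total r 1 with h | h
          · rw [ENNReal.ofReal_of_nonpos (sub_nonpos.2 h), add_zero, abs_sub_comm,
              abs_of_nonneg (sub_nonneg.2 h)]
          · rw [ENNReal.ofReal_of_nonpos (sub_nonpos.2 h), zero_add, abs_of_nonneg (sub_nonneg.2 h)]

lemma aux_main {X : Type*} [MeasurableSpace X] (μ ν : Measure X)
    [IsProbabilityMeasure μ] [IsProbabilityMeasure ν]
    (c : X → X → ℝ) (hcdiag : ∀ x, c x x = 0)
    (χ : X → ℝ) (hχmeas : Measurable χ) (hχ0 : ∀ x, 0 ≤ χ x)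
    (hcχ : ∀ x y, c x y ≤ χ x + χ y) (a : ℝ) (ha : 0 ≤ a)
    (hexp : (∫⁻ x, ENNReal.ofReal (Real.exp (a * χ x)) ∂μ) ≤ 2)
    (hH : relEntropy ν μ ≠ ⊤) (t : ℝ≥0) (ht : (t : ℝ≥0∞) ≤ optTransportCost c μ ν) :
    a * t ≤ (relEntropy ν μ).toReal + 2 * √(relEntropy ν μ).toReal := by
  have hh : ν ≪ μ ∧ Integrable (fun x => Real.log (ν.rnDeriv μ x).toReal) ν := by
    by_contra h
    exact hH (by rw [relEntropy, if_neg h])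
  obtain ⟨hac, hi⟩ := hh
  have hT := ht.trans (aux_cost μ ν hac c hcdiag χ hχmeas hχ0 hcχ)
  rw [aux_relEntropy ν μ hac hi] at hH ⊢
  apply aux_final _ _ _ ha t.2 ENNReal.toReal_nonneg
  intro s hs0 hs1
  have hfm : Measurable (fun x => (ν.rnDeriv μ x).toReal) :=
    (Measure.measurable_rnDeriv ν μ).ennreal_toReal
  have hkm : Measurable (fun x => ENNReal.ofReal (klFun (ν.rnDeriv μ x).toReal)) :=
    (measurable_klFun.comp hfm).ennreal_ofReal
  have hE : ∫⁻ x, ENNReal.ofReal (Real.exp (a * χ x) - 1) ∂μ ≤ 1 := by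
    have h1 : ∫⁻ x, ENNReal.ofReal (Real.exp (a * χ x) - 1) ∂μ + 1 ≤ 1 + 1 := by
      refine le_trans (le_of_eq ?_) (hexp.trans_eq one_add_one_eq_two.symm)
      have : (1 : ℝ≥0∞) = ∫⁻ x, 1 ∂μ := by simp
      rw [this, ← lintegral_add_right _ measurable_const]
      apply lintegral_congr
      intro x
      have : 0 ≤ a * χ x := mul_nonneg ha (hχ0 x)
      rw [← ENNReal.ofReal_one, ← ENNReal.ofReal_add (by linarith [Real.one_le_exp this]) zero_le_one]
      simp
    exact (ENNReal.add_le_add_iff_right one_ne_top).1 h1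
  have key : ENNReal.ofReal (s * (a * t)) ≤ klDiv ν μ + ENNReal.ofReal (s ^ 2) := by
    calc ENNReal.ofReal (s * (a * t)) = ENNReal.ofReal (s * a) * t := by
          rw [← mul_assoc, ENNReal.ofReal_mul (by positivity), ENNReal.ofReal_coe_nnreal]
      _ ≤ ENNReal.ofReal (s * a) *
          ∫⁻ x, ENNReal.ofReal (χ x * |(ν.rnDeriv μ x).toReal - 1|) ∂μ := by gcongr
      _ = ∫⁻ x, ENNReal.ofReal (s * a) *
          ENNReal.ofReal (χ x * |(ν.rnDeriv μ x).toReal - 1|) ∂μ := by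
          rw [lintegral_const_mul' _ _ ENNReal.ofReal_ne_top]
      _ ≤ ∫⁻ x, (ENNReal.ofReal (klFun (ν.rnDeriv μ x).toReal) +
          ENNReal.ofReal (s ^ 2) * ENNReal.ofReal (Real.exp (a * χ x) - 1)) ∂μ := by
          apply lintegral_mono
          intro x
          have hax : 0 ≤ a * χ x := mul_nonneg ha (hχ0 x)
          have h0 : 0 ≤ Real.exp (a * χ x) - 1 := by linarith [Real.one_le_exp hax]
          have h1 := aux_pt (ν.rnDeriv μ x).toReal s (a * χ x) ENNReal.toReal_nonneg hs0.le hs1 hax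
          simp only
          rw [← ENNReal.ofReal_mul (by positivity), ← ENNReal.ofReal_mul (by positivity),
            ← ENNReal.ofReal_add (klFun_nonneg ENNReal.toReal_nonneg) (by positivity)]
          apply ENNReal.ofReal_le_ofReal
          refine le_trans (le_of_eq ?_) h1
          ring
      _ = klDiv ν μ + ENNReal.ofReal (s ^ 2) *
          ∫⁻ x, ENNReal.ofReal (Real.exp (a * χ x) - 1) ∂μ := by
          rw [lintegral_add_left hkm, lintegral_const_mul' _ _ ENNReal.ofReal_ne_top,
            klDiv_eq_lintegral_klFun_of_ac hac]
      _ ≤ klDiv ν μ + ENNReal.ofReal (s ^ 2) * 1 := by gcongr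
      _ = _ := by rw [mul_one]
  rw [← ENNReal.ofReal_toReal hH, ← ENNReal.ofReal_add ENNReal.toReal_nonneg (by positivity)] at key
  exact (ENNReal.ofReal_le_ofReal_iff (by positivity)).1 key

lemma aux_orlicz {X : Type*} [MeasurableSpace X] (μ : Measure X) [IsProbabilityMeasure μ]
    (χ : X → ℝ) (hχ0 : ∀ x, 0 ≤ χ x) (δ₀ : ℝ) (hδ₀ : 0 < δ₀)
    (hδexp : ∫⁻ x, ENNReal.ofReal (Real.exp (δ₀ * χ x)) ∂μ < ⊤) :
    orliczNormE μ χ < ⊤ := by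
  set M := (∫⁻ x, ENNReal.ofReal (Real.exp (δ₀ * χ x)) ∂μ).toReal with hM
  have hM0 : 0 ≤ M := ENNReal.toReal_nonneg
  set e := (M + 1)⁻¹ with he
  have he0 : 0 < e := by positivity
  have he1 : e ≤ 1 := inv_le_one_of_one_le₀ (by linarith)
  have heM : e * M ≤ 1 := by
    rw [he, inv_mul_le_iff₀ (by positivity)]; linarith
  refine lt_of_le_of_lt (sInf_le (a := ENNReal.ofReal ((e * δ₀)⁻¹)) ⟨?_, ?_⟩) ENNReal.ofReal_lt_top
  · rw [ENNReal.ofReal_pos]; positivity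
  · rw [ENNReal.toReal_ofReal (by positivity)]
    calc _ ≤ ∫⁻ x, (1 + ENNReal.ofReal e * ENNReal.ofReal (Real.exp (δ₀ * χ x))) ∂μ := by
          apply lintegral_mono
          intro x
          simp only
          rw [← ENNReal.ofReal_mul he0.le, ← ENNReal.ofReal_one,
            ← ENNReal.ofReal_add zero_le_one (by positivity)]
          apply ENNReal.ofReal_le_ofReal
          rw [abs_of_nonneg (hχ0 x), div_inv_eq_mul]
          have := aux_conv e (δ₀ * χ x) he0.le he1
          rw [show χ x * (e * δ₀) = e * (δ₀ * χ x) by ring]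
          linarith
      _ = 1 + ENNReal.ofReal (e * M) := by
          rw [lintegral_add_left measurable_const, lintegral_const_mul' _ _ ENNReal.ofReal_ne_top,
            ENNReal.ofReal_mul he0.le, hM, ENNReal.ofReal_toReal hδexp.ne]
          simp
      _ ≤ 1 + 1 := by
          gcongr
          exact ENNReal.ofReal_le_one.2 heM
      _ = 2 := one_add_one_eq_two

lemma aux_ext (f : ℝ → ℝ) (v H : ℝ≥0∞)
    (h : H ≠ ⊤ → ∀ t : ℝ≥0, (t : ℝ≥0∞) ≤ v → f t ≤ H.toReal) : extFun f v ≤ H := by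
  by_cases hH : H = ⊤
  · rw [hH]; exact le_top
  · exact iSup₂_le fun t ht => ENNReal.ofReal_le_of_le_toReal (h hH t ht)

/-- If `c(x,x) = 0`, `c ≤ χ ⊕ χ` and `∫ e^{δ₀ χ} dμ < ∞`, then `‖χ‖_ρ < ∞` and
`α₀(t) = (√(t/‖χ‖_ρ + 1) − 1)²` is a transportation function for `c` and `μ`;
in particular if `∫ e^{a χ} dμ ≤ 2` then `t ↦ (√(a t + 1) − 1)²` is one. -/
theorem transportation_function_small_values
    {X : Type*} [TopologicalSpace X] [PolishSpace X] [MeasurableSpace X] [BorelSpace X]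
    (μ : Measure X) [IsProbabilityMeasure μ]
    (c : X → X → ℝ)
    (hc0 : ∀ x y, 0 ≤ c x y)
    (hcdiag : ∀ x, c x x = 0)
    (χ : X → ℝ) (hχmeas : Measurable χ) (hχ0 : ∀ x, 0 ≤ χ x)
    (hcχ : ∀ x y, c x y ≤ χ x + χ y)
    (δ₀ : ℝ) (hδ₀ : 0 < δ₀)
    (hδexp : ∫⁻ x, ENNReal.ofReal (Real.exp (δ₀ * χ x)) ∂μ < ⊤) :
    orliczNormE μ χ < ⊤ ∧
      (∀ ν : Measure X, IsProbabilityMeasure ν →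
        extFun (fun t => (Real.sqrt (t / (orliczNormE μ χ).toReal + 1) - 1) ^ 2)
            (optTransportCost c μ ν) ≤ relEntropy ν μ) ∧
      ∀ a : ℝ, 0 ≤ a → (∫⁻ x, ENNReal.ofReal (Real.exp (a * χ x)) ∂μ) ≤ 2 →
        ∀ ν : Measure X, IsProbabilityMeasure ν →
          extFun (fun t => (Real.sqrt (a * t + 1) - 1) ^ 2)
              (optTransportCost c μ ν) ≤ relEntropy ν μ := by
  have hN := aux_orlicz μ χ hχ0 δ₀ hδ₀ hδexp
  refine ⟨hN, ?_, ?_⟩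
  · intro ν hν
    apply aux_ext
    intro hH t ht
    set N := orliczNormE μ χ with hNdef
    set H := (relEntropy ν μ).toReal with hHdef
    have hH0 : 0 ≤ H := ENNReal.toReal_nonneg
    by_cases hN0 : N.toReal = 0
    · simp [hN0, hH0]
    have hNpos : 0 < N.toReal := lt_of_le_of_ne ENNReal.toReal_nonneg (Ne.symm hN0)
    apply aux_sqrt _ _ (by positivity) hH0
    rw [div_le_iff₀ hNpos]
    have hK : 0 ≤ H + 2 * √H := by positivity
    apply _root_.le_of_forall_pos_le_add
    intro e he
    set d := e / (H + 2 * √H + 1) with hd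
    have hd0 : 0 < d := by positivity
    have hlt : N < N + ENNReal.ofReal d :=
      ENNReal.lt_add_right hN.ne (by simpa using hd0)
    obtain ⟨b, ⟨hb0, hb⟩, hbN⟩ := sInf_lt_iff.1 hlt
    have hfin : N + ENNReal.ofReal d ≠ ⊤ := by simp [hN.ne]
    have hbt : b ≠ ⊤ := (hbN.trans_le le_top).ne
    have hbr : 0 < b.toReal := ENNReal.toReal_pos hb0.ne' hbt
    have hbd : b.toReal ≤ N.toReal + d := by
      have := ENNReal.toReal_mono hfin hbN.le
      rwa [ENNReal.toReal_add hN.ne ENNReal.ofReal_ne_top, ENNReal.toReal_ofReal hd0.le] at this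
    have h1 := aux_main μ ν c hcdiag χ hχmeas hχ0 hcχ (b.toReal)⁻¹ (by positivity) (by
      refine le_trans (le_of_eq ?_) hb
      apply lintegral_congr
      intro x
      rw [abs_of_nonneg (hχ0 x), div_eq_inv_mul]) hH t ht
    rw [inv_mul_le_iff₀ hbr] at h1
    have h2 : d * (H + 2 * √H) ≤ e := by
      rw [hd, div_mul_eq_mul_div, div_le_iff₀ (by positivity)]
      nlinarith
    nlinarith [mul_le_mul_of_nonneg_right hbd hK]
  · intro a ha hexp ν hν
    apply aux_ext
    intro hH t ht
    exact aux_sqrt _ _ (by positivity) ENNReal.toReal_nonneg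
      (aux_main μ ν c hcdiag χ hχmeas hχ0 hcχ a ha hexp hH t ht)

end
end

section
/- Let X be a Polish space and χ : X → [0,∞) a lower semicontinuous function, and define the semimetric d_χ(x,y) = 1_{x ≠ y}·(χ(x) + χ(y)). Then for all Borel probability measures μ and ν on X with ∫ χ dμ < ∞ and ∫ χ dν < ∞, the optimal transportation cost for the cost d_χ equals the weighted total variation: T_{d_χ}(μ,ν) = ∫ χ d|μ − ν|, where |μ − ν| denotes the total variation measure of the signed measure μ − ν. -/
open MeasureTheory ENNReal Set
open scoped NNReal ENNReal

noncomputable section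
lemma aux_le {X : Type*} [MeasurableSpace X] {α β P N : Measure X}
    (hs : P ⟂ₘ N) (h : α + N = β + P) : P ≤ α := by
  obtain ⟨A, hA, hPA, hNA⟩ := hs
  refine Measure.le_iff.2 fun E hE => ?_
  have h1 : (α + N) (E ∩ Aᶜ) = (β + P) (E ∩ Aᶜ) := by rw [h]
  simp only [Measure.add_apply] at h1
  have hN0 : N (E ∩ Aᶜ) = 0 := measure_mono_null inter_subset_right hNA
  have hP0 : P (E ∩ A) = 0 := measure_mono_null inter_subset_right hPA
  rw [hN0, add_zero] at h1
  calc P E ≤ P (E ∩ A) + P (E ∩ Aᶜ) := measure_le_inter_add_sdiff P E A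
    _ = P (E ∩ Aᶜ) := by rw [hP0, zero_add]
    _ ≤ β (E ∩ Aᶜ) + P (E ∩ Aᶜ) := le_add_self
    _ = α (E ∩ Aᶜ) := h1.symm
    _ ≤ α E := measure_mono inter_subset_left

lemma aux_cancel {X : Type*} [MeasurableSpace X] {δ α β : Measure X} [IsFiniteMeasure δ]
    (h : δ + α = δ + β) : α = β := by
  ext E hE
  have h1 : (δ + α) E = (δ + β) E := by rw [h]
  simp only [Measure.add_apply] at h1
  exact (ENNReal.add_right_inj (measure_ne_top δ E)).1 h1

lemma aux_jordan {X : Type*} [MeasurableSpace X] (μ ν : Measure X)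
    [IsFiniteMeasure μ] [IsFiniteMeasure ν] :
    μ + (μ.toSignedMeasure - ν.toSignedMeasure).toJordanDecomposition.negPart =
    ν + (μ.toSignedMeasure - ν.toSignedMeasure).toJordanDecomposition.posPart := by
  have h := SignedMeasure.toSignedMeasure_toJordanDecomposition
    (μ.toSignedMeasure - ν.toSignedMeasure)
  rw [JordanDecomposition.toSignedMeasure] at h
  rw [← Measure.toSignedMeasure_eq_toSignedMeasure_iff, Measure.toSignedMeasure_add,
    Measure.toSignedMeasure_add]
  rw [sub_eq_sub_iff_add_eq_add] at h
  rw [← h, add_comm]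

lemma aux_lower {X : Type*} [MeasurableSpace X] (hD : MeasurableSet (diagonal X))
    (f : X → ℝ≥0∞) (hf : Measurable f) (c : X × X → ℝ≥0∞)
    (hc : ∀ p, p ∉ diagonal X → c p = f p.1 + f p.2)
    (P N : Measure X) [IsFiniteMeasure P] [IsFiniteMeasure N] (hs : P ⟂ₘ N)
    (π : Measure (X × X)) [IsFiniteMeasure π]
    (h : π.map Prod.fst + N = π.map Prod.snd + P) :
    ∫⁻ x, f x ∂(P + N) ≤ ∫⁻ p, c p ∂π := by
  set D := diagonal X with hDdef
  have hsplit : π = π.restrict D + π.restrict Dᶜ := (Measure.restrict_add_restrict_compl hD).symm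
  have hdiag : (π.restrict D).map Prod.fst = (π.restrict D).map Prod.snd := by
    refine Measure.map_congr ?_
    filter_upwards [ae_restrict_mem hD] with p hp
    exact hp
  have h2 : (π.restrict Dᶜ).map Prod.fst + N = (π.restrict Dᶜ).map Prod.snd + P := by
    apply aux_cancel (δ := (π.restrict D).map Prod.fst)
    rw [← add_assoc, ← add_assoc, ← Measure.map_add _ _ measurable_fst]
    rw [hdiag]
    rw [← Measure.map_add _ _ measurable_snd, ← hsplit, h]
  have hP := aux_le hs h2
  have hN := aux_le hs.symm h2.symm
  calc ∫⁻ x, f x ∂(P + N) = ∫⁻ x, f x ∂P + ∫⁻ x, f x ∂N := lintegral_add_measure _ _ _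
    _ ≤ ∫⁻ x, f x ∂((π.restrict Dᶜ).map Prod.fst) + ∫⁻ x, f x ∂((π.restrict Dᶜ).map Prod.snd) :=
        add_le_add (lintegral_mono' hP le_rfl) (lintegral_mono' hN le_rfl)
    _ = ∫⁻ p in Dᶜ, f p.1 ∂π + ∫⁻ p in Dᶜ, f p.2 ∂π := by
        rw [lintegral_map hf measurable_fst, lintegral_map hf measurable_snd]
    _ = ∫⁻ p in Dᶜ, (f p.1 + f p.2) ∂π :=
        (lintegral_add_left (hf.comp measurable_fst) _).symm
    _ = ∫⁻ p in Dᶜ, c p ∂π :=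
        setLIntegral_congr_fun hD.compl fun p hp => (hc p hp).symm
    _ ≤ ∫⁻ p, c p ∂π := setLIntegral_le_lintegral _ _

lemma aux_upper {X : Type*} [MeasurableSpace X] (hD : MeasurableSet (diagonal X))
    (f : X → ℝ≥0∞) (hf : Measurable f) (c : X × X → ℝ≥0∞)
    (hc0 : ∀ p, p ∈ diagonal X → c p = 0)
    (hc : ∀ p, c p ≤ f p.1 + f p.2)
    (η P N : Measure X) [IsFiniteMeasure P] [IsFiniteMeasure N]
    (hm : P univ = N univ) :
    ∃ π : Measure (X × X), (π.map Prod.fst = η + P ∧ π.map Prod.snd = η + N) ∧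
      ∫⁻ p, c p ∂π ≤ ∫⁻ x, f x ∂(P + N) := by
  have hdm : Measurable (fun x : X => (x, x)) := measurable_id.prodMk measurable_id
  have e1 : ((P univ)⁻¹ * P univ) • P = P := by
    by_cases h0 : P univ = 0
    · rw [Measure.measure_univ_eq_zero.1 h0, smul_zero]
    · rw [ENNReal.inv_mul_cancel h0 (measure_ne_top _ _), one_smul]
  have e2 : ((P univ)⁻¹ * P univ) • N = N := by
    by_cases h0 : P univ = 0
    · rw [Measure.measure_univ_eq_zero.1 (hm.symm.trans h0), smul_zero]
    · rw [ENNReal.inv_mul_cancel h0 (measure_ne_top _ _), one_smul]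
  have m1 : ((P univ)⁻¹ • P.prod N).map Prod.fst = P := by
    rw [Measure.map_smul, Measure.map_fst_prod, smul_smul, ← hm, e1]
  have m2 : ((P univ)⁻¹ • P.prod N).map Prod.snd = N := by
    rw [Measure.map_smul, Measure.map_snd_prod, smul_smul, e2]
  refine ⟨η.map (fun x => (x, x)) + (P univ)⁻¹ • P.prod N, ⟨?_, ?_⟩, ?_⟩
  · rw [Measure.map_add _ _ measurable_fst, m1, Measure.map_map measurable_fst hdm]
    congr 1
    exact Measure.map_id
  · rw [Measure.map_add _ _ measurable_snd, m2, Measure.map_map measurable_snd hdm]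
    congr 1
    exact Measure.map_id
  · have hz : ∫⁻ p, c p ∂(η.map (fun x => (x, x))) = 0 := by
      have : ∀ᵐ p ∂(η.map (fun x => (x, x))), c p = 0 := by
        have h1 : ∀ᵐ p ∂(η.map (fun x : X => (x, x))), p ∈ diagonal X :=
          (ae_map_iff hdm.aemeasurable hD).2 (Filter.Eventually.of_forall fun x => rfl)
        filter_upwards [h1] with p hp using hc0 p hp
      rw [lintegral_congr_ae this, lintegral_zero]
    rw [lintegral_add_measure, hz, zero_add]
    calc ∫⁻ p, c p ∂((P univ)⁻¹ • P.prod N)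
        ≤ ∫⁻ p, (f p.1 + f p.2) ∂((P univ)⁻¹ • P.prod N) := lintegral_mono hc
      _ = ∫⁻ p, f p.1 ∂((P univ)⁻¹ • P.prod N) + ∫⁻ p, f p.2 ∂((P univ)⁻¹ • P.prod N) :=
        lintegral_add_left (hf.comp measurable_fst) _
      _ = ∫⁻ x, f x ∂P + ∫⁻ x, f x ∂N := by
        rw [← lintegral_map hf measurable_fst, ← lintegral_map hf measurable_snd, m1, m2]
      _ = ∫⁻ x, f x ∂(P + N) := (lintegral_add_measure _ _ _).symm

open scoped Classical in
/-- `𝒯_{d_χ}(μ,ν) = ∫ χ d|μ − ν|` where `d_χ(x,y) = 1_{x≠y}(χ(x)+χ(y))`. -/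
theorem transport_dchi_eq_weighted_TV
    {X : Type*} [TopologicalSpace X] [PolishSpace X] [MeasurableSpace X] [BorelSpace X]
    (χ : X → ℝ) (hχ0 : ∀ x, 0 ≤ χ x) (hχlsc : LowerSemicontinuous χ)
    (dχ : X → X → ℝ)
    (hdχ : ∀ x y, dχ x y = if x = y then 0 else χ x + χ y)
    (μ ν : Measure X) [IsProbabilityMeasure μ] [IsProbabilityMeasure ν]
    (hμχ : ∫⁻ x, ENNReal.ofReal (χ x) ∂μ < ⊤)
    (hνχ : ∫⁻ x, ENNReal.ofReal (χ x) ∂ν < ⊤) :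
    optTransportCost dχ μ ν =
      ∫⁻ x, ENNReal.ofReal (χ x)
        ∂((μ.toSignedMeasure - ν.toSignedMeasure).totalVariation) := by
  have hD : MeasurableSet (diagonal X) := measurableSet_diagonal
  have hf : Measurable fun x => ENNReal.ofReal (χ x) := hχlsc.measurable.ennreal_ofReal
  have hJ := aux_jordan μ ν
  have hs := (μ.toSignedMeasure - ν.toSignedMeasure).toJordanDecomposition.mutuallySingular
  unfold SignedMeasure.totalVariation
  generalize hP : (μ.toSignedMeasure - ν.toSignedMeasure).toJordanDecomposition.posPart = P at *
  generalize hN : (μ.toSignedMeasure - ν.toSignedMeasure).toJordanDecomposition.negPart = N at *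
  have : IsFiniteMeasure P := hP ▸ inferInstance
  have : IsFiniteMeasure N := hN ▸ inferInstance
  have hc : ∀ p : X × X, p ∉ diagonal X → ENNReal.ofReal (dχ p.1 p.2) =
      ENNReal.ofReal (χ p.1) + ENNReal.ofReal (χ p.2) := by
    intro p hp
    have hp' : ¬ p.1 = p.2 := hp
    rw [hdχ, if_neg hp', ENNReal.ofReal_add (hχ0 _) (hχ0 _)]
  have hc0 : ∀ p : X × X, p ∈ diagonal X → ENNReal.ofReal (dχ p.1 p.2) = 0 := by
    intro p hp
    have hp' : p.1 = p.2 := hp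
    rw [hdχ, if_pos hp', ENNReal.ofReal_zero]
  unfold optTransportCost
  apply le_antisymm
  · have hPle : P ≤ μ := aux_le hs hJ
    have hμ : (μ - P) + P = μ := Measure.sub_add_cancel_of_le hPle
    have hν : (μ - P) + N = ν := by
      apply aux_cancel (δ := P)
      rw [← add_assoc, add_comm P, hμ, hJ, add_comm]
    have hm : P univ = N univ := by
      have h1 : (μ + N) univ = (ν + P) univ := by rw [hJ]
      simp only [Measure.add_apply, measure_univ] at h1
      exact ((ENNReal.add_right_inj ENNReal.one_ne_top).1 h1).symm
    obtain ⟨π, ⟨h1, h2⟩, h3⟩ := aux_upper hD _ hf (fun p => ENNReal.ofReal (dχ p.1 p.2)) hc0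
      (fun p => by
        by_cases hp : p ∈ diagonal X
        · simp only [hc0 p hp]; exact zero_le
        · exact (hc p hp).le) (μ - P) P N hm
    exact (iInf₂_le π ⟨h1.trans hμ, h2.trans hν⟩).trans h3
  · refine le_iInf₂ fun π hπ => ?_
    have : IsFiniteMeasure π := by
      refine ⟨?_⟩
      have h1 : π.map Prod.fst univ = 1 := by rw [hπ.1, measure_univ]
      rw [Measure.map_apply measurable_fst MeasurableSet.univ, preimage_univ] at h1
      rw [h1]; exact ENNReal.one_lt_top
    exact aux_lower hD _ hf (fun p => ENNReal.ofReal (dχ p.1 p.2)) hc P N hs π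
      (by rw [hπ.1, hπ.2, hJ])

end
end

section
/- Let (X,d) be a Polish metric space and μ a Borel probability measure with ∫ d(x_o,x) μ(dx) < ∞ for all x_o ∈ X. Suppose α is in the class C and the T_1-inequality α(T_d(μ,ν)) ≤ H(ν|μ) holds for all Borel probability measures ν on X. Then for every 1-Lipschitz function φ : X → ℝ and every t > 0, μ( { x : φ(x) ≥ ∫ φ dμ + t } ) ≤ e^{−α(t)}. -/
open MeasureTheory ENNReal Set
open scoped NNReal ENNReal

noncomputable section

/-- Lower bound of the transport cost. -/
theorem aux_cost_s17 {X : Type*} [MetricSpace X] [PolishSpace X] [MeasurableSpace X] [BorelSpace X]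
    (μ ν : Measure X) [IsProbabilityMeasure μ]
    (φ : X → ℝ) (hφ : LipschitzWith 1 φ) (hint : Integrable φ μ) (t : ℝ)
    (hν : ∀ᵐ x ∂ν, (∫ y, φ y ∂μ) + t ≤ φ x) :
    ENNReal.ofReal t ≤ optTransportCost (fun x y => dist x y) μ ν := by
  unfold optTransportCost
  refine le_iInf₂ fun π hπ => ?_
  obtain ⟨h1, h2⟩ := hπ
  set m := ∫ y, φ y ∂μ with hm
  have hprob : IsProbabilityMeasure π := by
    constructor
    have h := Measure.map_apply (μ := π) measurable_fst (MeasurableSet.univ (α := X))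
    rw [h1, measure_univ, preimage_univ] at h
    exact h.symm
  have hae : ∀ᵐ p ∂π, m + t ≤ φ p.2 := by
    rw [← h2] at hν
    exact ae_of_ae_map measurable_snd.aemeasurable hν
  have hi1 : Integrable (fun p : X × X => φ p.1) π := by
    rw [← h1] at hint
    exact hint.comp_measurable measurable_fst
  have hval : ∫ p, φ p.1 ∂π = m := by
    rw [hm, ← h1, integral_map measurable_fst.aemeasurable]
    rw [h1]; exact hint.1
  have hi : Integrable (fun p : X × X => (m + t) - φ p.1) π := (integrable_const _).sub hi1
  have heq : ∫ p, ((m + t) - φ p.1) ∂π = t := by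
    rw [integral_sub (integrable_const _) hi1, hval]; simp
  have hpos : t ≤ ∫ p, max ((m + t) - φ p.1) 0 ∂π := by
    refine heq.symm.le.trans ?_
    exact integral_mono hi hi.pos_part (fun p => le_max_left _ _)
  calc ENNReal.ofReal t ≤ ENNReal.ofReal (∫ p, max ((m + t) - φ p.1) 0 ∂π) :=
        ENNReal.ofReal_le_ofReal hpos
    _ = ∫⁻ p, ENNReal.ofReal (max ((m + t) - φ p.1) 0) ∂π :=
        ofReal_integral_eq_lintegral_ofReal hi.pos_part (ae_of_all _ fun p => le_max_right _ _)
    _ ≤ _ := by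
        refine lintegral_mono_ae ?_
        filter_upwards [hae] with p hp
        refine ENNReal.ofReal_le_ofReal (max_le ?_ dist_nonneg)
        have := hφ.dist_le_mul p.1 p.2
        rw [Real.dist_eq] at this
        have h3 := neg_abs_le (φ p.1 - φ p.2)
        simp at this
        linarith

/-- Entropy of the conditioned measure. -/
theorem aux_entropy {X : Type*} [MeasurableSpace X] (μ : Measure X) [IsProbabilityMeasure μ]
    (A : Set X) (hA : MeasurableSet A) (h0 : μ A ≠ 0) :
    relEntropy ((μ A)⁻¹ • μ.restrict A) μ = ENNReal.ofReal (- Real.log (μ A).toReal) := by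
  have htop : (μ A)⁻¹ ≠ ⊤ := ENNReal.inv_ne_top.2 h0
  set ν := (μ A)⁻¹ • μ.restrict A with hν
  have hP : IsProbabilityMeasure ν := ⟨by
    simp [hν, ENNReal.inv_mul_cancel h0 (measure_ne_top μ A)]⟩
  have hac : ν ≪ μ := Measure.restrict_le_self.absolutelyContinuous.smul_left _
  have hrn : ν.rnDeriv μ =ᵐ[μ] fun x => (μ A)⁻¹ * A.indicator 1 x := by
    filter_upwards [Measure.rnDeriv_smul_left_of_ne_top (μ.restrict A) μ htop,
      Measure.rnDeriv_restrict_self μ hA] with x h1 h2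
    rw [h1, Pi.smul_apply, h2, smul_eq_mul]
  have hAν : ∀ᵐ x ∂ν, x ∈ A := Measure.ae_smul_measure (ae_restrict_mem hA) _
  have hlog : (fun x => Real.log (ν.rnDeriv μ x).toReal) =ᵐ[ν]
      fun _ => - Real.log (μ A).toReal := by
    filter_upwards [hac.ae_le hrn, hAν] with x h1 h2
    rw [h1, indicator_of_mem h2]
    simp [ENNReal.toReal_inv]
  unfold relEntropy
  rw [if_pos ⟨hac, (integrable_const _).congr hlog.symm⟩, integral_congr_ae hlog]
  simp

/-- Gaussian-type deviation bound for Lipschitz functions under a `T₁`-inequality. -/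
theorem T1_lipschitz_deviation
    {X : Type*} [MetricSpace X] [PolishSpace X] [MeasurableSpace X] [BorelSpace X]
    (μ : Measure X) [IsProbabilityMeasure μ]
    (hmom : ∀ x₀ : X, ∫⁻ x, ENNReal.ofReal (dist x₀ x) ∂μ < ⊤)
    (α : ℝ≥0∞ → ℝ≥0∞) (hα : ClassCFun α)
    (hT1 : ∀ ν : Measure X, IsProbabilityMeasure ν →
      α (optTransportCost (fun x y => dist x y) μ ν) ≤ relEntropy ν μ)
    (φ : X → ℝ) (hφ : LipschitzWith 1 φ)
    (t : ℝ) (ht : 0 < t) :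
    μ {x | (∫ y, φ y ∂μ) + t ≤ φ x} ≤ (expEN (α (ENNReal.ofReal t)))⁻¹ := by
  set A := {x | (∫ y, φ y ∂μ) + t ≤ φ x} with hAdef
  have hA : MeasurableSet A := measurableSet_le measurable_const hφ.continuous.measurable
  by_cases h0 : μ A = 0
  · rw [h0]; exact zero_le
  have hne : Nonempty X := nonempty_of_isProbabilityMeasure μ
  obtain ⟨x₀⟩ := hne
  have hd : Integrable (fun x => dist x₀ x) μ := by
    refine ⟨(continuous_const.dist continuous_id).aestronglyMeasurable, ?_⟩
    rw [hasFiniteIntegral_iff_ofReal (ae_of_all _ fun _ => dist_nonneg)]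
    exact hmom x₀
  have hint : Integrable φ μ := by
    refine ((integrable_const |φ x₀|).add hd).mono' hφ.continuous.aestronglyMeasurable ?_
    refine ae_of_all _ fun x => ?_
    have h1 := hφ.dist_le_mul x x₀
    rw [Real.dist_eq, dist_comm] at h1
    simp only [NNReal.coe_one, one_mul] at h1
    have h2 := abs_sub_abs_le_abs_sub (φ x) (φ x₀)
    simp only [Pi.add_apply, Real.norm_eq_abs]
    linarith
  have hP : IsProbabilityMeasure ((μ A)⁻¹ • μ.restrict A) := ⟨by
    simp [ENNReal.inv_mul_cancel h0 (measure_ne_top μ A)]⟩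
  have hAν : ∀ᵐ x ∂((μ A)⁻¹ • μ.restrict A), (∫ y, φ y ∂μ) + t ≤ φ x :=
    Measure.ae_smul_measure (ae_restrict_mem hA) _
  have hle : α (ENNReal.ofReal t) ≤ ENNReal.ofReal (- Real.log (μ A).toReal) := by
    rw [← aux_entropy μ A hA h0]
    exact (hα.1 (aux_cost_s17 μ _ φ hφ hint t hAν)).trans (hT1 _ hP)
  have hpos : 0 < (μ A).toReal := ENNReal.toReal_pos h0 (measure_ne_top μ A)
  have hle1 : (μ A).toReal ≤ 1 := measureReal_le_one
  have hlog : 0 ≤ - Real.log (μ A).toReal := by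
    have := Real.log_nonpos hpos.le hle1
    linarith
  have hnt : α (ENNReal.ofReal t) ≠ ⊤ := ne_top_of_le_ne_top ENNReal.ofReal_ne_top hle
  rw [expEN, if_neg hnt, ENNReal.le_inv_iff_le_inv]
  have h3 := ENNReal.toReal_le_of_le_ofReal hlog hle
  calc _ ≤ ENNReal.ofReal (Real.exp (- Real.log (μ A).toReal)) :=
        ENNReal.ofReal_le_ofReal (Real.exp_le_exp.2 h3)
    _ = (μ A)⁻¹ := by
        rw [Real.exp_neg, Real.exp_log hpos, ENNReal.ofReal_inv_of_pos hpos,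
          ENNReal.ofReal_toReal (measure_ne_top μ A)]

end
end

section
/- Let (X,d) be a Polish metric space and μ a Borel probability measure with ∫ d(x_o,x) μ(dx) < ∞ for all x_o ∈ X. Suppose α is in the class C, is unbounded, and the T_1-inequality α(T_d(μ,ν)) ≤ H(ν|μ) holds for all Borel probability measures ν on X. Then for every Borel set A with μ(A) > 0, setting r_A = inf{ r ≥ 0 : α(r) ≥ −log μ(A) }, one has the concentration inequality μ(A^r) ≥ 1 − e^{−α(r − r_A)} for all r ≥ r_A, where A^r = { x ∈ X : d(x,A) ≤ r } is the r-enlargement of A. -/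
open MeasureTheory ENNReal Set
open scoped NNReal ENNReal

noncomputable section

lemma relEntropy_cond_le {X : Type*} [MeasurableSpace X] (μ : Measure X) [IsProbabilityMeasure μ]
    (A : Set X) (hA : MeasurableSet A) (hApos : 0 < μ A) :
    relEntropy (ProbabilityTheory.cond μ A) μ ≤ ENNReal.ofReal (-Real.log (μ A).toReal) := by
  have hac : ProbabilityTheory.cond μ A ≪ μ := ProbabilityTheory.cond_absolutelyContinuous
  have : IsProbabilityMeasure (ProbabilityTheory.cond μ A) :=
    ProbabilityTheory.cond_isProbabilityMeasure hApos.ne'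
  have h1 : (ProbabilityTheory.cond μ A).rnDeriv μ =ᵐ[μ] A.indicator (fun _ => (μ A)⁻¹) := by
    have h2 : ProbabilityTheory.cond μ A = μ.withDensity (A.indicator (fun _ => (μ A)⁻¹)) := by
      rw [withDensity_indicator hA, withDensity_const]; rfl
    rw [h2]
    exact Measure.rnDeriv_withDensity μ (measurable_const.indicator hA)
  have hmem : ∀ᵐ x ∂(ProbabilityTheory.cond μ A), x ∈ A := ProbabilityTheory.ae_cond_mem hA
  have h3 : (fun x => Real.log ((ProbabilityTheory.cond μ A).rnDeriv μ x).toReal)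
      =ᵐ[ProbabilityTheory.cond μ A] fun _ => -Real.log (μ A).toReal := by
    filter_upwards [hac.ae_le h1, hmem] with x hx hxA
    rw [hx, Set.indicator_of_mem hxA, ENNReal.toReal_inv, Real.log_inv]
  have hint : Integrable (fun x => Real.log ((ProbabilityTheory.cond μ A).rnDeriv μ x).toReal)
      (ProbabilityTheory.cond μ A) := (integrable_const _).congr h3.symm
  unfold relEntropy
  rw [if_pos ⟨hac, hint⟩, integral_congr_ae h3]
  simp

lemma lintegral_le_cost {X : Type*} [MetricSpace X] [PolishSpace X] [MeasurableSpace X]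
    [BorelSpace X] (μ ν : Measure X) (f : X → ℝ≥0∞) (hf : Measurable f)
    (hL : ∀ x y, f x ≤ f y + edist x y) :
    ∫⁻ x, f x ∂μ ≤ ∫⁻ x, f x ∂ν + optTransportCost (fun x y => dist x y) μ ν ∧
    ∫⁻ x, f x ∂ν ≤ ∫⁻ x, f x ∂μ + optTransportCost (fun x y => dist x y) μ ν := by
  unfold optTransportCost
  simp only [ENNReal.add_iInf, le_iInf_iff]
  constructor
  · rintro π ⟨rfl, rfl⟩
    rw [lintegral_map hf measurable_fst, lintegral_map hf measurable_snd,
      ← lintegral_add_left (f := fun p : X × X => f p.2) (hf.comp measurable_snd)]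
    refine lintegral_mono fun p => ?_
    rw [← edist_dist]
    exact hL _ _
  · rintro π ⟨rfl, rfl⟩
    rw [lintegral_map hf measurable_fst, lintegral_map hf measurable_snd,
      ← lintegral_add_left (f := fun p : X × X => f p.1) (hf.comp measurable_fst)]
    refine lintegral_mono fun p => ?_
    rw [← edist_dist, edist_comm]
    exact hL _ _

/-- Marton-type concentration of measure from a `T₁`-inequality. -/
theorem T1_concentration
    {X : Type*} [MetricSpace X] [PolishSpace X] [MeasurableSpace X] [BorelSpace X]
    (μ : Measure X) [IsProbabilityMeasure μ]
    (hmom : ∀ x₀ : X, ∫⁻ x, ENNReal.ofReal (dist x₀ x) ∂μ < ⊤)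
    (α : ℝ≥0∞ → ℝ≥0∞) (hα : ClassCFun α)
    (hunb : ∀ r : ℝ, ∃ v : ℝ≥0∞, ENNReal.ofReal r < α v)
    (hT1 : ∀ ν : Measure X, IsProbabilityMeasure ν →
      α (optTransportCost (fun x y => dist x y) μ ν) ≤ relEntropy ν μ)
    (A : Set X) (hA : MeasurableSet A) (hApos : 0 < μ A)
    (rA : ℝ)
    (hrA : rA = sInf {r : ℝ | 0 ≤ r ∧
      ENNReal.ofReal (-Real.log (μ A).toReal) ≤ α (ENNReal.ofReal r)}) :
    ∀ r : ℝ, rA ≤ r →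
      1 - (expEN (α (ENNReal.ofReal (r - rA))))⁻¹ ≤ μ (Metric.cthickening r A) := by
  intro r hr
  obtain ⟨hmono, h0, hconv, hleft⟩ := hα
  set L : ℝ := -Real.log (μ A).toReal with hLdef
  set S := {r : ℝ | 0 ≤ r ∧ ENNReal.ofReal L ≤ α (ENNReal.ofReal r)} with hS
  have hSb : BddBelow S := ⟨0, fun x hx => hx.1⟩
  have hrA0 : 0 ≤ rA := hrA ▸ Real.sInf_nonneg fun x hx => hx.1
  have hr0 : 0 ≤ r := hrA0.trans hr
  have hfin : ∀ c : ℝ, ∃ v : ℝ≥0∞, v < ⊤ ∧ ENNReal.ofReal c < α v := by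
    intro c
    obtain ⟨v, hv⟩ := hunb c
    rcases eq_or_ne v ⊤ with rfl | hvt
    · rw [hleft ⊤ ENNReal.top_ne_zero] at hv
      simp only [lt_iSup_iff] at hv
      obtain ⟨y, hy, hy2⟩ := hv
      exact ⟨y, hy, hy2⟩
    · exact ⟨v, hvt.lt_top, hv⟩
  have hSne : S.Nonempty := by
    obtain ⟨v, hv, hv2⟩ := hfin L
    refine ⟨v.toReal, ENNReal.toReal_nonneg, ?_⟩
    rw [ENNReal.ofReal_toReal hv.ne]
    exact hv2.le
  have hclosed : IsClosed (Metric.cthickening r A) := Metric.isClosed_cthickening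
  set B := (Metric.cthickening r A)ᶜ with hB
  have hBm : MeasurableSet B := hclosed.measurableSet.compl
  have hμB : μ (Metric.cthickening r A) = 1 - μ B := by
    rw [← prob_compl_eq_one_sub hBm, hB, compl_compl]
  rw [hμB]
  refine tsub_le_tsub_left ?_ 1
  rcases eq_or_ne (μ B) 0 with hB0 | hB0
  · rw [hB0]; exact zero_le
  have hBpos : 0 < μ B := pos_iff_ne_zero.mpr hB0
  -- μ A < 1, so L > 0
  have hdisj : Disjoint A B := by
    rw [hB, Set.disjoint_compl_right_iff_subset]
    exact Metric.self_subset_cthickening A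
  have hA1 : μ A < 1 := by
    have h : μ A + μ B ≤ 1 := by
      rw [← measure_union hdisj hBm]; exact prob_le_one
    calc μ A < μ A + μ B := ENNReal.lt_add_right (measure_ne_top _ _) hB0
      _ ≤ 1 := h
  have hAr0 : 0 < (μ A).toReal := ENNReal.toReal_pos hApos.ne' (measure_ne_top _ _)
  have hLpos : 0 < L := by
    rw [hLdef, neg_pos]
    refine Real.log_neg hAr0 ?_
    rw [← ENNReal.toReal_one]
    exact (ENNReal.toReal_lt_toReal (measure_ne_top _ _) ENNReal.one_ne_top).2 hA1
  have hpA : IsProbabilityMeasure (ProbabilityTheory.cond μ A) :=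
    ProbabilityTheory.cond_isProbabilityMeasure hApos.ne'
  have hpB : IsProbabilityMeasure (ProbabilityTheory.cond μ B) :=
    ProbabilityTheory.cond_isProbabilityMeasure hB0
  set a := optTransportCost (fun x y => dist x y) μ (ProbabilityTheory.cond μ A) with ha
  set b := optTransportCost (fun x y => dist x y) μ (ProbabilityTheory.cond μ B) with hb
  have hαa : α a ≤ ENNReal.ofReal L := (hT1 _ hpA).trans (relEntropy_cond_le μ A hA hApos)
  have hαb : α b ≤ ENNReal.ofReal (-Real.log (μ B).toReal) :=
    (hT1 _ hpB).trans (relEntropy_cond_le μ B hBm hBpos)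
  -- the Lipschitz test function
  set f : X → ℝ≥0∞ := fun x => min (Metric.infEDist x A) (ENNReal.ofReal r) with hf
  have hfm : Measurable f := by
    rw [hf]; exact (Metric.continuous_infEDist.measurable).min measurable_const
  have hfL : ∀ x y, f x ≤ f y + edist x y := by
    intro x y
    simp only [hf]
    rw [min_add]
    exact min_le_min Metric.infEDist_le_infEDist_add_edist le_self_add
  have hfA : ∫⁻ x, f x ∂(ProbabilityTheory.cond μ A) = 0 := by
    rw [lintegral_eq_zero_iff hfm]
    filter_upwards [ProbabilityTheory.ae_cond_mem hA] with x hx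
    simp [hf, Metric.infEDist_zero_of_mem hx]
  have hfB : ∫⁻ x, f x ∂(ProbabilityTheory.cond μ B) = ENNReal.ofReal r := by
    have : f =ᵐ[ProbabilityTheory.cond μ B] fun _ => ENNReal.ofReal r := by
      filter_upwards [ProbabilityTheory.ae_cond_mem hBm] with x hx
      simp only [hB, Set.mem_compl_iff, Metric.mem_cthickening_iff, not_le] at hx
      exact min_eq_right hx.le
    rw [lintegral_congr_ae this]; simp
  have hMa := (lintegral_le_cost μ (ProbabilityTheory.cond μ A) f hfm hfL).1
  have hMb := (lintegral_le_cost μ (ProbabilityTheory.cond μ B) f hfm hfL).2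
  rw [hfA, zero_add] at hMa
  rw [hfB] at hMb
  have hab : ENNReal.ofReal r ≤ a + b := hMb.trans (by gcongr)
  have hat : a ≠ ⊤ := by
    rintro hat
    obtain ⟨v, hv, hv2⟩ := hfin L
    have := hmono (le_top : v ≤ ⊤)
    rw [hat] at hαa
    exact absurd (hv2.trans_le (this.trans hαa)) (lt_irrefl _)
  have harA : a ≤ ENNReal.ofReal rA := by
    rw [ENNReal.le_ofReal_iff_toReal_le hat hrA0, hrA]
    refine le_csInf hSne ?_
    rintro s ⟨hs0, hs⟩
    by_contra hlt
    push Not at hlt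
    have hapos : 0 < a.toReal := hs0.trans_lt hlt
    set q : ℝ≥0 := ⟨s / a.toReal, div_nonneg hs0 hapos.le⟩ with hq
    have hq1 : q < 1 := by
      rw [← NNReal.coe_lt_coe]
      exact (div_lt_one hapos).2 hlt
    have hc := hconv 0 a (1 - q) q (tsub_add_cancel_of_le hq1.le)
    have hqa : (q : ℝ≥0∞) * a = ENNReal.ofReal s := by
      rw [← ENNReal.ofReal_toReal hat, ← ENNReal.ofReal_coe_nnreal,
        ← ENNReal.ofReal_mul (NNReal.coe_nonneg q)]
      congr 1
      exact div_mul_cancel₀ s hapos.ne'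
    rw [mul_zero, zero_add, h0, mul_zero, zero_add, hqa] at hc
    have h1 : ENNReal.ofReal L ≤ q * ENNReal.ofReal L := hs.trans (hc.trans (by gcongr))
    have h2 : (q : ℝ≥0∞) * ENNReal.ofReal L < 1 * ENNReal.ofReal L := by
      refine ENNReal.mul_lt_mul_left (ENNReal.ofReal_pos.2 hLpos).ne' ENNReal.ofReal_ne_top ?_
      exact_mod_cast hq1
    rw [one_mul] at h2
    exact absurd (h1.trans_lt h2) (lt_irrefl _)
  have hrb : ENNReal.ofReal (r - rA) ≤ b := by
    rw [ENNReal.ofReal_sub _ hrA0, tsub_le_iff_left]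
    exact hab.trans (by gcongr)
  have hfinal := (hmono hrb).trans hαb
  rw [ENNReal.le_inv_iff_le_inv]
  have hBr0 : 0 < (μ B).toReal := ENNReal.toReal_pos hB0 (measure_ne_top _ _)
  have hBr1 : (μ B).toReal ≤ 1 := by
    rw [← ENNReal.toReal_one]
    exact ENNReal.toReal_mono ENNReal.one_ne_top prob_le_one
  have hne : α (ENNReal.ofReal (r - rA)) ≠ ⊤ := ne_top_of_le_ne_top ENNReal.ofReal_ne_top hfinal
  rw [expEN, if_neg hne]
  have h5 : (α (ENNReal.ofReal (r - rA))).toReal ≤ -Real.log (μ B).toReal :=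
    ENNReal.toReal_le_of_le_ofReal (neg_nonneg.2 (Real.log_nonpos hBr0.le hBr1)) hfinal
  have h6 : (μ B)⁻¹ = ENNReal.ofReal ((μ B).toReal)⁻¹ := by
    rw [ENNReal.ofReal_inv_of_pos hBr0, ENNReal.ofReal_toReal (measure_ne_top _ _)]
  rw [h6]
  refine ENNReal.ofReal_le_ofReal ?_
  calc Real.exp _ ≤ Real.exp (-Real.log (μ B).toReal) := Real.exp_le_exp.2 h5
    _ = _ := by rw [Real.exp_neg, Real.exp_log hBr0]


end
end
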